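/- arXiv:1402.6134 — 4 statements merged into one kernel-verified Lean document; each statement's English description precedes it below -/
import Mathlib

section
/- Let n ≥ 1, 1 < p < ∞ and β < p − 1, and let Ω ⊆ ℝⁿ be an open set with nonempty complement. Assume that the lower Assouad codimension of Ω^c is greater than p − β, i.e. there exist t > p − β and C_A ≥ 1 such that |(Ω^c)_r ∩ B(x,R)| ≤ C_A (r/R)^t |B(x,R)| for every x ∈ Ω^c and all 0 < r < R < ∞. Then Ω admits a (p,β)-Hardy inequality: there exists C > 0 such that ∫_Ω |u(x)|^p d_Ω(x)^{β−p} dx ≤ C ∫_Ω ‖∇u(x)‖^p d_Ω(x)^β dx for every Lipschitz function u : ℝⁿ → ℝ with compact support contained in Ω. -/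
open MeasureTheory Metric ENNReal

lemma hardy_line1d {f : ℝ → ℝ} {K : NNReal} (hf : LipschitzWith K f) {b : ℝ} (hb : 0 < b)
    (hfb : f b = 0) : ‖f 0‖ₑ ≤ ∫⁻ s in Set.Ioi (0:ℝ), ‖deriv f s‖ₑ := by
  have h1 : AbsolutelyContinuousOnInterval f 0 b :=
    (hf.lipschitzOnWith (s := Set.uIcc 0 b)).absolutelyContinuousOnInterval
  have h2 := h1.integral_deriv_eq_sub
  rw [hfb, zero_sub, intervalIntegral.integral_of_le hb.le] at h2
  calc ‖f 0‖ₑ = ‖∫ s in Set.Ioc 0 b, deriv f s‖ₑ := by rw [h2, enorm_neg]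
    _ ≤ ∫⁻ s in Set.Ioc 0 b, ‖deriv f s‖ₑ := enorm_integral_le_lintegral_enorm _
    _ ≤ _ := lintegral_mono_set (fun x hx => hx.1)

lemma hardy_line {n : ℕ} {g : EuclideanSpace ℝ (Fin n) → ℝ} {K : NNReal} (hg : LipschitzWith K g)
    (hc : HasCompactSupport g) {v : EuclideanSpace ℝ (Fin n)} (hv : v ≠ 0) :
    ∀ᵐ y, ‖g y‖ₑ ≤ ∫⁻ s in Set.Ioi (0:ℝ), ‖fderiv ℝ g (y + s • v)‖ₑ * ‖v‖ₑ := by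
  have hd : ∀ᵐ x, DifferentiableAt ℝ g x := hg.ae_differentiableAt
  have hms : MeasurableSet {x | DifferentiableAt ℝ g x} := measurableSet_of_differentiableAt ℝ g
  have h1 : ∀ᵐ y, ∀ᵐ s : ℝ, DifferentiableAt ℝ g (y + s • v) := by
    have : ∀ᵐ s : ℝ, ∀ᵐ y, DifferentiableAt ℝ g (y + s • v) := by
      filter_upwards with s
      exact (measurePreserving_add_right volume (s • v)).quasiMeasurePreserving.ae hd
    refine (Measure.ae_ae_comm ?_).1 this
    have : Measurable (fun q : ℝ × EuclideanSpace ℝ (Fin n) => q.2 + q.1 • v) := by fun_prop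
    exact this hms
  filter_upwards [h1] with y hy
  have hline : LipschitzWith (K * ‖v‖₊) (fun s : ℝ => g (y + s • v)) := by
    refine hg.comp (LipschitzWith.of_dist_le_mul fun a b => ?_)
    rw [dist_add_left, dist_eq_norm, ← sub_smul, norm_smul, mul_comm, Real.dist_eq]
    simp
  obtain ⟨R, hR⟩ := hc.isCompact.isBounded.exists_norm_le
  have hv' : 0 < ‖v‖ := norm_pos_iff.2 hv
  have hb : ∃ b : ℝ, 0 < b ∧ g (y + b • v) = 0 := by
    refine ⟨(|R| + ‖y‖ + 1) / ‖v‖, by positivity, ?_⟩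
    by_contra hne
    have h3 := hR _ (subset_tsupport g hne)
    have h4 : ‖((|R| + ‖y‖ + 1) / ‖v‖) • v‖ = |R| + ‖y‖ + 1 := by
      rw [norm_smul, Real.norm_of_nonneg (by positivity)]; field_simp
    have h5 := norm_sub_le (y + ((|R| + ‖y‖ + 1) / ‖v‖) • v) y
    rw [add_sub_cancel_left, h4] at h5
    have := le_abs_self R
    linarith
  obtain ⟨b, hb0, hb1⟩ := hb
  have h6 := hardy_line1d hline hb0 hb1
  simp only [zero_smul, add_zero] at h6
  refine h6.trans (lintegral_mono_ae ?_)
  filter_upwards [ae_restrict_of_ae hy] with s hs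
  have h7 : HasDerivAt (fun s : ℝ => y + s • v) v s := by
    simpa using ((hasDerivAt_id s).smul_const v).const_add y
  have h8 := hs.hasFDerivAt.comp_hasDerivAt s h7
  have h9 : deriv (fun s : ℝ => g (y + s • v)) s = fderiv ℝ g (y + s • v) v := h8.deriv
  rw [h9]
  exact ContinuousLinearMap.le_opENorm _ _

lemma hardy_rep {n : ℕ} (hn : 1 ≤ n) {g : EuclideanSpace ℝ (Fin n) → ℝ} {K : NNReal}
    (hg : LipschitzWith K g)
    (hc : HasCompactSupport g) {W : EuclideanSpace ℝ (Fin n) → ℝ≥0∞} (hW : Measurable W) :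
    volume (closedBall (0 : EuclideanSpace ℝ (Fin n)) 1) * ∫⁻ y, ‖g y‖ₑ * W y ≤
      ∫⁻ x, ‖fderiv ℝ g x‖ₑ * ∫⁻ s in Set.Ioi (0:ℝ),
        ∫⁻ v in closedBall (0 : EuclideanSpace ℝ (Fin n)) 1, W (x - s • v) := by
  have : Nonempty (Fin n) := ⟨⟨0, hn⟩⟩
  have : Nontrivial (EuclideanSpace ℝ (Fin n)) := inferInstance
  have hF : Measurable (fun x => ‖fderiv ℝ g x‖ₑ) := (measurable_fderiv ℝ g).enorm
  set B := closedBall (0 : EuclideanSpace ℝ (Fin n)) 1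
  set F := fun x => ‖fderiv ℝ g x‖ₑ with hFdef
  have key : ∀ v ∈ B, v ≠ 0 → ∫⁻ y, ‖g y‖ₑ * W y ≤
      ∫⁻ s in Set.Ioi (0:ℝ), ∫⁻ x, F x * W (x - s • v) := by
    intro v hvB hv
    have hv1 : ‖v‖ₑ ≤ 1 := by
      have : ‖v‖ ≤ 1 := by simpa [B] using hvB
      rw [← ofReal_norm]; exact ENNReal.ofReal_le_one.2 this
    calc ∫⁻ y, ‖g y‖ₑ * W y ≤ ∫⁻ y, ∫⁻ s in Set.Ioi (0:ℝ), F (y + s • v) * W y := by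
          refine lintegral_mono_ae ?_
          filter_upwards [hardy_line hg hc hv] with y hy
          rw [lintegral_mul_const _ (by fun_prop)]
          gcongr
          refine hy.trans (lintegral_mono fun s => ?_)
          exact mul_le_of_le_one_right' hv1
      _ = ∫⁻ s in Set.Ioi (0:ℝ), ∫⁻ y, F (y + s • v) * W y := by
          rw [lintegral_lintegral_swap]
          exact Measurable.aemeasurable (by fun_prop)
      _ = _ := by
          refine lintegral_congr fun s => ?_
          rw [← lintegral_add_right_eq_self (fun x => F x * W (x - s • v)) (s • v)]
          simp
  calc volume B * ∫⁻ y, ‖g y‖ₑ * W y = ∫⁻ v in B, ∫⁻ y, ‖g y‖ₑ * W y := by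
        rw [lintegral_const, mul_comm]; simp
    _ ≤ ∫⁻ v in B, ∫⁻ s in Set.Ioi (0:ℝ), ∫⁻ x, F x * W (x - s • v) := by
        refine lintegral_mono_ae ?_
        have h0 : ∀ᵐ v : EuclideanSpace ℝ (Fin n), v ≠ 0 := Measure.ae_ne volume 0
        filter_upwards [ae_restrict_of_ae h0, ae_restrict_mem measurableSet_closedBall] with v h1 h2
        exact key v h2 h1
    _ = ∫⁻ v in B, ∫⁻ x, ∫⁻ s in Set.Ioi (0:ℝ), F x * W (x - s • v) := by
        refine lintegral_congr fun v => ?_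
        rw [lintegral_lintegral_swap]
        exact Measurable.aemeasurable (by fun_prop)
    _ = ∫⁻ x, ∫⁻ v in B, ∫⁻ s in Set.Ioi (0:ℝ), F x * W (x - s • v) := by
        rw [lintegral_lintegral_swap]
        refine Measurable.aemeasurable ?_
        refine Measurable.lintegral_prod_right' (f := fun q : (EuclideanSpace ℝ (Fin n) × EuclideanSpace ℝ (Fin n)) × ℝ => F q.1.2 * W (q.1.2 - q.2 • q.1.1)) ?_
        fun_prop
    _ = ∫⁻ x, F x * ∫⁻ s in Set.Ioi (0:ℝ), ∫⁻ v in B, W (x - s • v) := by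
        refine lintegral_congr fun x => ?_
        rw [lintegral_lintegral_swap (Measurable.aemeasurable (by fun_prop))]
        rw [← lintegral_const_mul]
        · refine lintegral_congr fun s => ?_
          rw [lintegral_const_mul _ (by fun_prop)]
        · refine Measurable.lintegral_prod_right' (f := fun q : ℝ × EuclideanSpace ℝ (Fin n) => W (x - q.1 • q.2)) ?_
          fun_prop

lemma hardy_vol {n : ℕ} (z : EuclideanSpace ℝ (Fin n)) {R : ℝ} (hR : 0 ≤ R) :
    volume (closedBall z R) =
      ENNReal.ofReal (R ^ n) * volume (closedBall (0 : EuclideanSpace ℝ (Fin n)) 1) := by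
  have := Measure.addHaar_closedBall_mul volume z hR (zero_le_one' ℝ)
  simpa using this

lemma hardy_ball {n : ℕ} {D : Set (EuclideanSpace ℝ (Fin n))} {t C_A α : ℝ} (hα : 1 < α)
    (ht : α < t) (hCA : 1 ≤ C_A)
    (hthin : ∀ x ∈ D, ∀ r R : ℝ, 0 < r → r < R →
      volume (Metric.thickening r D ∩ Metric.closedBall x R) ≤
        ENNReal.ofReal (C_A * (r / R) ^ t) * volume (Metric.closedBall x R)) :
    ∃ C : ℝ≥0∞, C ≠ ∞ ∧ ∀ z ∈ D, ∀ R : ℝ, 0 < R →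
      ∫⁻ y in closedBall z R, ENNReal.ofReal (infDist y D ^ (-α)) ≤
        C * ENNReal.ofReal (R ^ (-α) * R ^ n) := by
  set q : ℝ := (1/2 : ℝ) ^ (t - α) with hq
  have hq0 : 0 < q := by positivity
  have hq1 : q < 1 := Real.rpow_lt_one (by norm_num) (by norm_num) (by linarith)
  set V := volume (closedBall (0 : EuclideanSpace ℝ (Fin n)) 1) with hV
  have hVtop : V ≠ ∞ := measure_closedBall_lt_top.ne
  have hsum : Summable (fun k : ℕ => C_A * 4 ^ n * q ^ (k + 1)) := by
    refine Summable.mul_left _ ?_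
    exact (summable_nat_add_iff 1).2 (summable_geometric_of_lt_one hq0.le hq1)
  refine ⟨(∑' k : ℕ, ENNReal.ofReal (C_A * 4 ^ n * q ^ (k + 1))) * V,
    ENNReal.mul_ne_top hsum.tsum_ofReal_ne_top hVtop, ?_⟩
  intro z hz R hR
  set T : ℕ → Set (EuclideanSpace ℝ (Fin n)) := fun k =>
    thickening (2 * (1/2) ^ k * R) D ∩ closedBall z (4 * R) with hT
  have hTm : ∀ k, MeasurableSet (T k) := fun k =>
    isOpen_thickening.measurableSet.inter measurableSet_closedBall
  set c : ℕ → ℝ≥0∞ := fun k => ENNReal.ofReal (((1/2) ^ (k+1) * R) ^ (-α)) with hc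
  have hpt : ∀ y ∈ closedBall z R, ENNReal.ofReal (infDist y D ^ (-α)) ≤
      ∑' k, (T k).indicator (fun _ => c k) y := by
    intro y hy
    have hne : D.Nonempty := ⟨z, hz⟩
    rcases (infDist_nonneg (x := y) (s := D)).eq_or_lt with h0 | h0
    · rw [← h0, Real.zero_rpow (by linarith)]; simp
    have hdR : infDist y D ≤ R := (infDist_le_dist_of_mem hz).trans hy
    obtain ⟨k, hk1, hk2⟩ := exists_nat_pow_near_of_lt_one (x := infDist y D / R) (y := (1/2:ℝ))
      (by positivity) (by rw [div_le_one hR]; exact hdR) (by norm_num) (by norm_num)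
    rw [lt_div_iff₀ hR] at hk1
    rw [div_le_iff₀ hR] at hk2
    have hyT : y ∈ T k := by
      refine ⟨?_, closedBall_subset_closedBall (by linarith) hy⟩
      rw [mem_thickening_iff_infDist_lt hne]
      have : 0 < (1/2:ℝ) ^ k * R := by positivity
      linarith
    refine le_trans ?_ (ENNReal.le_tsum k)
    rw [Set.indicator_of_mem hyT]
    refine ENNReal.ofReal_le_ofReal ?_
    exact Real.rpow_le_rpow_of_nonpos (by positivity) hk1.le (by linarith)
  calc ∫⁻ y in closedBall z R, ENNReal.ofReal (infDist y D ^ (-α))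
      ≤ ∫⁻ y in closedBall z R, ∑' k, (T k).indicator (fun _ => c k) y :=
        setLIntegral_mono' measurableSet_closedBall hpt
    _ ≤ ∫⁻ y, ∑' k, (T k).indicator (fun _ => c k) y := setLIntegral_le_lintegral _ _
    _ = ∑' k, c k * volume (T k) := by
        rw [lintegral_tsum]
        · congr 1; ext k
          rw [lintegral_indicator_const (hTm k)]
        · intro k
          exact (measurable_const.indicator (hTm k)).aemeasurable
    _ ≤ ∑' k : ℕ, ENNReal.ofReal (C_A * 4 ^ n * q ^ (k + 1)) *
          (V * ENNReal.ofReal (R ^ (-α) * R ^ n)) := by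
        refine ENNReal.tsum_le_tsum fun k => ?_
        have hlt : 2 * (1/2:ℝ) ^ k * R < 4 * R := by
          have : (1/2:ℝ)^k ≤ 1 := pow_le_one₀ (by norm_num) (by norm_num)
          nlinarith
        have h1 := hthin z hz (2 * (1/2) ^ k * R) (4 * R) (by positivity) hlt
        rw [hardy_vol z (by positivity : 0 ≤ 4 * R), ← mul_assoc] at h1
        refine (mul_le_mul_right h1 (c k)).trans (le_of_eq ?_)
        have hx : 2 * (1/2:ℝ) ^ k * R / (4 * R) = (1/2) ^ (k+1) := by
          field_simp; ring
        rw [hx]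
        set x : ℝ := (1/2) ^ (k+1) with hxdef
        have hx0 : 0 < x := by positivity
        have hqx : q ^ (k+1) = x ^ (t - α) := by
          rw [hq, hxdef, ← Real.rpow_natCast, ← Real.rpow_natCast, ← Real.rpow_mul (by norm_num),
            ← Real.rpow_mul (by norm_num), mul_comm]
        rw [hqx, ← hV]
        rw [mul_comm V, ← mul_assoc, ← mul_assoc, hc, ← ENNReal.ofReal_mul (by positivity),
          ← ENNReal.ofReal_mul (by positivity),
          ← mul_assoc (ENNReal.ofReal _) (ENNReal.ofReal _) V, ← ENNReal.ofReal_mul (by positivity)]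
        congr 2
        rw [Real.mul_rpow hx0.le hR.le, sub_eq_add_neg, Real.rpow_add hx0, mul_pow]
        ring
    _ = _ := by
        rw [ENNReal.tsum_mul_right, mul_assoc]

lemma hardy_scale {n : ℕ} {W : EuclideanSpace ℝ (Fin n) → ℝ≥0∞} (hW : Measurable W)
    (x : EuclideanSpace ℝ (Fin n)) {s : ℝ} (hs : 0 < s) :
    ∫⁻ v in closedBall (0 : EuclideanSpace ℝ (Fin n)) 1, W (x - s • v) =
      ENNReal.ofReal ((s ^ n)⁻¹) * ∫⁻ y in closedBall x s, W y := by
  set f := (closedBall x s).indicator W with hf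
  have hfm : Measurable f := hW.indicator measurableSet_closedBall
  rw [← lintegral_indicator measurableSet_closedBall, ← lintegral_indicator measurableSet_closedBall]
  have h1 : ∀ v, (closedBall (0 : EuclideanSpace ℝ (Fin n)) 1).indicator (fun v => W (x - s • v)) v
      = f (x - s • v) := by
    intro v
    have : v ∈ closedBall (0 : EuclideanSpace ℝ (Fin n)) 1 ↔ x - s • v ∈ closedBall x s := by
      simp [mem_closedBall, dist_eq_norm, norm_smul, abs_of_pos hs, hs]
    by_cases hv : v ∈ closedBall (0 : EuclideanSpace ℝ (Fin n)) 1
    · rw [hf, Set.indicator_of_mem hv, Set.indicator_of_mem (this.1 hv)]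
    · rw [hf, Set.indicator_of_notMem hv, Set.indicator_of_notMem (fun h => hv (this.2 h))]
  simp_rw [h1]
  have h2 := lintegral_map (μ := volume) (f := fun w => f (x - w)) (g := fun v => s • v)
    (by fun_prop) (by fun_prop)
  rw [← h2, Measure.map_addHaar_smul volume hs.ne', lintegral_smul_measure,
    lintegral_sub_left_eq_self]
  simp [abs_of_pos hs, hf]

lemma hardy_kernel {n : ℕ} {D : Set (EuclideanSpace ℝ (Fin n))} (hD : IsClosed D)
    (hDne : D.Nonempty) {t C_A α : ℝ} (hα : 1 < α)
    (ht : α < t) (hCA : 1 ≤ C_A)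
    (hthin : ∀ x ∈ D, ∀ r R : ℝ, 0 < r → r < R →
      volume (Metric.thickening r D ∩ Metric.closedBall x R) ≤
        ENNReal.ofReal (C_A * (r / R) ^ t) * volume (Metric.closedBall x R)) :
    ∃ C : ℝ≥0∞, C ≠ ∞ ∧ ∀ x, 0 < infDist x D →
      ∫⁻ s in Set.Ioi (0:ℝ), ∫⁻ v in closedBall (0 : EuclideanSpace ℝ (Fin n)) 1,
        ENNReal.ofReal (infDist (x - s • v) D ^ (-α)) ≤
        C * ENNReal.ofReal (infDist x D ^ (1 - α)) := by
  obtain ⟨C, hC, hball⟩ := hardy_ball hα ht hCA hthin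
  set V := volume (closedBall (0 : EuclideanSpace ℝ (Fin n)) 1) with hV
  have hVtop : V ≠ ∞ := measure_closedBall_lt_top.ne
  have hWm : Measurable (fun y => ENNReal.ofReal (infDist y D ^ (-α))) := by
    have : Measurable (fun y => infDist y D) := measurable_infDist
    fun_prop
  refine ⟨V * ENNReal.ofReal ((1/2) ^ (-α) * (1/4)) +
    C * ENNReal.ofReal (5 ^ (-α) * 5 ^ n * ((1/4) ^ (1 - α) / (α - 1))), by finiteness, ?_⟩
  intro x hx
  set d := infDist x D with hd
  have hIoi : Set.Ioi (0:ℝ) = Set.Ioc 0 (d/4) ∪ Set.Ioi (d/4) :=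
    (Set.Ioc_union_Ioi_eq_Ioi (by positivity)).symm
  rw [hIoi]
  refine (lintegral_union_le _ _ _).trans ?_
  rw [add_mul]
  gcongr ?_ + ?_
  · calc _ ≤ ∫⁻ s in Set.Ioc 0 (d/4), V * ENNReal.ofReal ((d/2) ^ (-α)) := by
          refine setLIntegral_mono' measurableSet_Ioc fun s hs => ?_
          calc _ ≤ ∫⁻ v in closedBall (0 : EuclideanSpace ℝ (Fin n)) 1,
                ENNReal.ofReal ((d/2) ^ (-α)) := by
                refine setLIntegral_mono' measurableSet_closedBall fun v hv => ?_
                refine ENNReal.ofReal_le_ofReal ?_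
                refine Real.rpow_le_rpow_of_nonpos (by positivity) ?_ (by linarith)
                have h1 : d ≤ infDist (x - s • v) D + dist x (x - s • v) := infDist_le_infDist_add_dist
                have h2 : dist x (x - s • v) = s * ‖v‖ := by
                  simp [dist_eq_norm, norm_smul, abs_of_pos hs.1]
                have h3 : ‖v‖ ≤ 1 := by simpa using hv
                have h4 : s * ‖v‖ ≤ s := mul_le_of_le_one_right hs.1.le h3
                have := hs.2
                linarith
            _ = _ := by rw [setLIntegral_const, mul_comm]
      _ = V * ENNReal.ofReal ((1/2) ^ (-α) * (1/4)) * ENNReal.ofReal (d ^ (1 - α)) := by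
          rw [setLIntegral_const, Real.volume_Ioc, mul_assoc, mul_assoc,
            ← ENNReal.ofReal_mul (by positivity), ← ENNReal.ofReal_mul (by positivity)]
          congr 2
          rw [div_eq_mul_one_div d 2, Real.mul_rpow hx.le (by norm_num), sub_eq_add_neg 1 α,
            Real.rpow_add hx, Real.rpow_one]
          ring
      _ ≤ _ := le_rfl
  · calc _ ≤ ∫⁻ s in Set.Ioi (d/4), C * ENNReal.ofReal (5 ^ (-α) * 5 ^ n * s ^ (-α)) := by
          refine setLIntegral_mono' measurableSet_Ioi fun s hs => ?_
          have hs' : d / 4 < s := hs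
          have hs0 : 0 < s := lt_trans (by positivity) hs'
          rw [hardy_scale hWm x hs0]
          obtain ⟨z, hz, hzd⟩ := hD.exists_infDist_eq_dist hDne x
          have hsub : closedBall x s ⊆ closedBall z (5 * s) :=
            closedBall_subset_closedBall' (by rw [← hzd]; linarith)
          calc _ ≤ ENNReal.ofReal ((s ^ n)⁻¹) *
                (C * ENNReal.ofReal ((5 * s) ^ (-α) * (5 * s) ^ n)) := by
                gcongr
                exact (lintegral_mono_set hsub).trans (hball z hz _ (by positivity))
            _ = _ := by
                rw [mul_left_comm, ← ENNReal.ofReal_mul (by positivity)]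
                congr 2
                rw [Real.mul_rpow (by norm_num) hs0.le, mul_pow]
                field_simp
      _ = C * ENNReal.ofReal (5 ^ (-α) * 5 ^ n * ((1/4) ^ (1 - α) / (α - 1))) *
            ENNReal.ofReal (d ^ (1 - α)) := by
          have hd4 : 0 < d / 4 := by positivity
          have hint := integrableOn_Ioi_rpow_of_lt (a := -α) (by linarith) hd4
          rw [lintegral_const_mul _ (by fun_prop), ← ofReal_integral_eq_lintegral_ofReal
            (hint.const_mul _), integral_const_mul, integral_Ioi_rpow_of_lt (by linarith) hd4,
            mul_assoc C, ← ENNReal.ofReal_mul]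
          · congr 2
            rw [div_eq_mul_one_div d 4, show -α + 1 = 1 - α by ring,
              Real.mul_rpow hx.le (by norm_num), show 1 - α = -(α - 1) by ring, div_neg, neg_div,
              neg_neg]
            ring
          · have : 0 < α - 1 := by linarith
            positivity
          · filter_upwards [ae_restrict_mem measurableSet_Ioi] with s hs
            have : 0 < s := hd4.trans hs
            simp only [Pi.zero_apply]
            positivity

lemma hardy_pow_lip {E : Type*} [PseudoMetricSpace E] {u : E → ℝ} {L : NNReal}
    (hu : LipschitzWith L u) {M p : ℝ}
    (hp : 1 < p) (hM : ∀ x, |u x| ≤ M) : ∃ K : NNReal, LipschitzWith K (fun x => |u x| ^ p) := by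
  rcases isEmpty_or_nonempty E with hE | ⟨⟨x0⟩⟩
  · exact ⟨0, fun x => (hE.false x).elim⟩
  have hM0 : 0 ≤ M := (abs_nonneg _).trans (hM x0)
  refine ⟨Real.toNNReal (p * M ^ (p - 1)) * L, ?_⟩
  refine LipschitzWith.of_dist_le_mul fun x y => ?_
  have h1 := (convex_Icc (-M) M).norm_image_sub_le_of_norm_hasDerivWithin_le
    (f := fun x => |x| ^ p) (f' := fun x => p * |x| ^ (p - 2) * x) (C := p * M ^ (p - 1))
    (fun x _ => (hasDerivAt_abs_rpow x hp).hasDerivWithinAt) ?_ (abs_le.1 (hM y)) (abs_le.1 (hM x))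
  · rw [dist_eq_norm]
    refine h1.trans ?_
    have h2 := hu.dist_le_mul x y
    rw [dist_eq_norm] at h2
    rw [NNReal.coe_mul, Real.coe_toNNReal _ (by positivity), mul_assoc _ (L : ℝ)]
    exact mul_le_mul_of_nonneg_left h2 (by positivity)
  · intro x hx
    have hxM : |x| ≤ M := abs_le.2 hx
    rw [norm_mul, norm_mul, Real.norm_of_nonneg (by linarith : 0 ≤ p),
      Real.norm_of_nonneg (by positivity), Real.norm_eq_abs, mul_assoc]
    gcongr
    rcases (abs_nonneg x).eq_or_lt with h0 | h0
    · rw [← h0, mul_zero]; positivity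
    · calc |x| ^ (p - 2) * |x| = |x| ^ (p - 1) := by
            rw [← Real.rpow_add_one h0.ne']; ring_nf
        _ ≤ M ^ (p - 1) := Real.rpow_le_rpow h0.le hxM (by linarith)

lemma hardy_pow_fderiv {E : Type*} [NormedAddCommGroup E] [NormedSpace ℝ E] {u : E → ℝ} {p : ℝ}
    (hp : 1 < p) {x : E} (hx : DifferentiableAt ℝ u x) :
    ‖fderiv ℝ (fun x => |u x| ^ p) x‖ ≤ p * (|u x| ^ (p - 1) * ‖fderiv ℝ u x‖) := by
  have h := (hasDerivAt_abs_rpow (u x) hp).comp_hasFDerivAt x hx.hasFDerivAt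
  have h' : fderiv ℝ (fun x => |u x| ^ p) x = (p * |u x| ^ (p - 2) * u x) • fderiv ℝ u x := h.fderiv
  rw [h', norm_smul, norm_mul, norm_mul, Real.norm_of_nonneg (by linarith : 0 ≤ p),
      Real.norm_of_nonneg (by positivity), Real.norm_eq_abs, mul_assoc, mul_assoc]
  have hp0 : 0 ≤ p := by linarith
  rw [← mul_assoc (|u x| ^ (p-2))]
  gcongr
  rcases (abs_nonneg (u x)).eq_or_lt with h0 | h0
  · rw [← h0, mul_zero]; positivity
  · rw [← Real.rpow_add_one h0.ne']; ring_nf; rfl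

lemma hardy_absorb {X Y C : ℝ≥0∞} {p q : ℝ} (hpq : p.HolderConjugate q) (hX : X ≠ ∞)
    (h : X ≤ C * (X ^ (1 / q) * Y ^ (1 / p))) : X ≤ C ^ p * Y := by
  rcases eq_or_ne X 0 with h0 | h0
  · simp [h0]
  have hp := hpq.pos
  have hq := hpq.symm.pos
  have h1 : X ^ (1/q) ≠ 0 := by simp [h0, hX]
  have h2 : X ^ (1/q) ≠ ∞ := ENNReal.rpow_ne_top_of_nonneg (by positivity) hX
  have h3 : X = X ^ (1/q) * X ^ (1/p) := by
    rw [← ENNReal.rpow_add _ _ h0 hX]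
    have : 1/q + 1/p = 1 := by
      have := hpq.symm.inv_add_inv_eq_one; simpa [one_div] using this
    rw [this, ENNReal.rpow_one]
  have h4 : X ^ (1/q) * X ^ (1/p) ≤ X ^ (1/q) * (C * Y ^ (1/p)) := by
    rw [← h3]; rwa [mul_left_comm]
  have h5 := (ENNReal.mul_le_mul_iff_right h1 h2).1 h4
  have h6 := ENNReal.rpow_le_rpow h5 hp.le
  rw [ENNReal.mul_rpow_of_nonneg _ _ hp.le, ← ENNReal.rpow_mul, ← ENNReal.rpow_mul,
    one_div_mul_cancel hp.ne', ENNReal.rpow_one, ENNReal.rpow_one] at h6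
  exact h6

lemma hardy_finite {n : ℕ} {Ω : Set (EuclideanSpace ℝ (Fin n))} (hΩopen : IsOpen Ω)
    (hΩc : Ωᶜ.Nonempty) {u : EuclideanSpace ℝ (Fin n) → ℝ} (hu : Continuous u)
    (hc : HasCompactSupport u) (hs : tsupport u ⊆ Ω) {p a : ℝ} (hp : 1 < p) :
    ∫⁻ x in Ω, ENNReal.ofReal (|u x| ^ p * Metric.infDist x Ωᶜ ^ a) ≠ ∞ := by
  have hcont : ContinuousOn (fun x => |u x| ^ p * Metric.infDist x Ωᶜ ^ a) (tsupport u) := by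
    refine ContinuousOn.mul ?_ ?_
    · exact (hu.abs.rpow_const (fun x => Or.inr (by linarith))).continuousOn
    · refine ContinuousOn.rpow_const (continuous_infDist_pt _).continuousOn fun x hx => Or.inl ?_
      have := (hΩopen.isClosed_compl.notMem_iff_infDist_pos hΩc (x := x)).1 (fun h => h (hs hx))
      exact this.ne'
  obtain ⟨M, hM⟩ := hc.isCompact.exists_bound_of_continuousOn hcont
  have hle : ∀ x, ENNReal.ofReal (|u x| ^ p * Metric.infDist x Ωᶜ ^ a) ≤
      (tsupport u).indicator (fun _ => ENNReal.ofReal M) x := by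
    intro x
    by_cases hx : x ∈ tsupport u
    · rw [Set.indicator_of_mem hx]
      exact ENNReal.ofReal_le_ofReal ((le_abs_self _).trans (hM x hx))
    · rw [image_eq_zero_of_notMem_tsupport hx, abs_zero, Real.zero_rpow (by linarith)]; simp
  refine ne_top_of_le_ne_top ?_ ((setLIntegral_le_lintegral _ _).trans (lintegral_mono hle))
  rw [lintegral_indicator_const (isClosed_tsupport u).measurableSet]
  exact ENNReal.mul_ne_top ofReal_ne_top hc.isCompact.measure_lt_top.ne

/-- Euclidean case of Theorem 1.1: if the lower Assouad codimension of
`Ωᶜ` exceeds `p - β` (with `β < p - 1 < p`), then `Ω` admits a `(p,β)`-Hardy inequality. -/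
theorem hardy_of_lower_assouad_codim_gt
    (n : ℕ) (hn : 1 ≤ n) (p β : ℝ) (hp : 1 < p) (hβ : β < p - 1)
    (Ω : Set (EuclideanSpace ℝ (Fin n))) (hΩopen : IsOpen Ω) (hΩc : Ωᶜ.Nonempty)
    (t C_A : ℝ) (ht : p - β < t) (hCA : 1 ≤ C_A)
    (hthin : ∀ x ∈ Ωᶜ, ∀ r R : ℝ, 0 < r → r < R →
      volume (Metric.thickening r Ωᶜ ∩ Metric.closedBall x R) ≤
        ENNReal.ofReal (C_A * (r / R) ^ t) * volume (Metric.closedBall x R)) :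
    ∃ C : ℝ, 0 < C ∧ ∀ u : EuclideanSpace ℝ (Fin n) → ℝ,
      (∃ L : NNReal, LipschitzWith L u) → HasCompactSupport u → tsupport u ⊆ Ω →
      ∫⁻ x in Ω, ENNReal.ofReal (|u x| ^ p * Metric.infDist x Ωᶜ ^ (β - p)) ≤
        ENNReal.ofReal C *
          ∫⁻ x in Ω, ENNReal.ofReal (‖fderiv ℝ u x‖ ^ p * Metric.infDist x Ωᶜ ^ β) := by
  have hα : 1 < p - β := by linarith
  obtain ⟨C, hC, hker⟩ := hardy_kernel hΩopen.isClosed_compl hΩc hα ht hCA hthin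
  set V := volume (closedBall (0 : EuclideanSpace ℝ (Fin n)) 1) with hV
  have hVtop : V ≠ ∞ := measure_closedBall_lt_top.ne
  have hV0 : V ≠ 0 := (measure_closedBall_pos volume _ one_pos).ne'
  have hp0 : 0 < p := by linarith
  set C1 : ℝ≥0∞ := V⁻¹ * (C * ENNReal.ofReal p) with hC1
  have hC1top : C1 ≠ ∞ := ENNReal.mul_ne_top (ENNReal.inv_ne_top.2 hV0)
    (ENNReal.mul_ne_top hC ofReal_ne_top)
  have hC1p : C1 ^ p ≠ ∞ := ENNReal.rpow_ne_top_of_nonneg hp0.le hC1top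
  refine ⟨(C1 ^ p).toReal + 1, by positivity, ?_⟩
  rintro u ⟨L, hL⟩ hc hs
  set X := ∫⁻ x in Ω, ENNReal.ofReal (|u x| ^ p * Metric.infDist x Ωᶜ ^ (β - p)) with hX
  set Y := ∫⁻ x in Ω, ENNReal.ofReal (‖fderiv ℝ u x‖ ^ p * Metric.infDist x Ωᶜ ^ β) with hY
  have hXtop : X ≠ ∞ := hardy_finite hΩopen hΩc hL.continuous hc hs hp
  have hpq : p.HolderConjugate (Real.conjExponent p) := Real.HolderConjugate.conjExponent hp
  set q := Real.conjExponent p with hq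
  have hq0 : 0 < q := hpq.symm.pos
  have hdm : Measurable (fun y => infDist y Ωᶜ) := measurable_infDist
  have hum : Measurable u := hL.continuous.measurable
  have hfm : Measurable (fun x => ‖fderiv ℝ u x‖) := (measurable_fderiv ℝ u).norm
  suffices hmain : X ≤ C1 * (X ^ (1 / q) * Y ^ (1 / p)) by
    refine (hardy_absorb hpq hXtop hmain).trans ?_
    gcongr
    calc C1 ^ p = ENNReal.ofReal (C1 ^ p).toReal := (ENNReal.ofReal_toReal hC1p).symm
      _ ≤ _ := ENNReal.ofReal_le_ofReal (by linarith)
  obtain ⟨M, hM⟩ := hc.exists_bound_of_continuous hL.continuous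
  obtain ⟨K, hK⟩ := hardy_pow_lip hL hp (M := M) hM
  have hgc : HasCompactSupport (fun x => |u x| ^ p) := by
    refine hc.comp_left (g := fun y : ℝ => |y| ^ p) ?_
    simp [Real.zero_rpow hp0.ne']
  have hWm : Measurable (fun y => ENNReal.ofReal (infDist y Ωᶜ ^ (-(p - β)))) := by fun_prop
  have hrep := hardy_rep hn hK hgc hWm
  have hXle : X ≤ ∫⁻ y, ‖|u y| ^ p‖ₑ * ENNReal.ofReal (infDist y Ωᶜ ^ (-(p - β))) := by
    refine (setLIntegral_le_lintegral _ _).trans (lintegral_mono fun y => ?_)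
    rw [Real.enorm_eq_ofReal (by positivity), ← ENNReal.ofReal_mul (by positivity), neg_sub]
  set Z := ∫⁻ x in Ω, ENNReal.ofReal (|u x| ^ (p - 1) * ‖fderiv ℝ u x‖ *
    infDist x Ωᶜ ^ (1 - (p - β))) with hZ
  have hVX : V * X ≤ (C * ENNReal.ofReal p) * Z := by
    refine (mul_le_mul_right hXle V).trans (hrep.trans ?_)
    rw [hZ, ← lintegral_const_mul _ (by fun_prop), ← lintegral_indicator hΩopen.measurableSet]
    refine lintegral_mono_ae ?_
    filter_upwards [hL.ae_differentiableAt] with x hx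
    by_cases hxΩ : x ∈ Ω
    · rw [Set.indicator_of_mem hxΩ]
      have hd : 0 < infDist x Ωᶜ :=
        (hΩopen.isClosed_compl.notMem_iff_infDist_pos hΩc).1 (fun h => h hxΩ)
      have h1 : ‖fderiv ℝ (fun x => |u x| ^ p) x‖ₑ ≤
          ENNReal.ofReal (p * (|u x| ^ (p - 1) * ‖fderiv ℝ u x‖)) := by
        rw [← ofReal_norm]
        exact ENNReal.ofReal_le_ofReal (hardy_pow_fderiv hp hx)
      refine (mul_le_mul' h1 (hker x hd)).trans (le_of_eq ?_)
      rw [ENNReal.ofReal_mul hp0.le, ENNReal.ofReal_mul (p := |u x| ^ (p - 1) * ‖fderiv ℝ u x‖)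
        (by positivity)]
      ring
    · rw [Set.indicator_of_notMem hxΩ]
      have h1 : fderiv ℝ (fun x => |u x| ^ p) x = 0 := by
        by_contra hne
        have h2 := support_fderiv_subset ℝ (f := fun x => |u x| ^ p) hne
        refine hxΩ (hs (closure_mono ?_ h2))
        intro z hz
        by_contra hz'
        simp only [Function.mem_support, not_not] at hz'
        exact hz (by simp [hz', Real.zero_rpow hp0.ne'])
      have h3 : ‖fderiv ℝ (fun x => |u x| ^ p) x‖ₑ = 0 := by rw [← ofReal_norm, h1, norm_zero, ENNReal.ofReal_zero]
      rw [h3, zero_mul]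
  have hXZ : X ≤ C1 * Z := by
    calc X = V⁻¹ * (V * X) := by rw [← mul_assoc, ENNReal.inv_mul_cancel hV0 hVtop, one_mul]
      _ ≤ V⁻¹ * ((C * ENNReal.ofReal p) * Z) := by gcongr
      _ = _ := by rw [hC1, mul_assoc V⁻¹]
  refine hXZ.trans ?_
  gcongr
  have hH := ENNReal.lintegral_mul_le_Lp_mul_Lq (volume.restrict Ω) hpq.symm
    (f := fun x => ENNReal.ofReal (|u x| ^ p * Metric.infDist x Ωᶜ ^ (β - p)) ^ (1 / q))
    (g := fun x => ENNReal.ofReal (‖fderiv ℝ u x‖ ^ p * Metric.infDist x Ωᶜ ^ β) ^ (1 / p))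
    (Measurable.aemeasurable (by fun_prop)) (Measurable.aemeasurable (by fun_prop))
  simp only [← ENNReal.rpow_mul, one_div_mul_cancel hq0.ne', one_div_mul_cancel hp0.ne',
    ENNReal.rpow_one] at hH
  refine le_trans (le_of_eq ?_) hH
  refine setLIntegral_congr_fun hΩopen.measurableSet fun x hxΩ => ?_
  have hd : 0 < infDist x Ωᶜ :=
    (hΩopen.isClosed_compl.notMem_iff_infDist_pos hΩc).1 (fun h => h hxΩ)
  have hpq1 : 1 / q = 1 - 1 / p := by
    have := hpq.symm.inv_add_inv_eq_one
    rw [one_div, one_div]; linarith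
  simp only [Pi.mul_apply]
  rw [ENNReal.ofReal_rpow_of_nonneg (by positivity) (by positivity),
    ENNReal.ofReal_rpow_of_nonneg (by positivity) (by positivity),
    ← ENNReal.ofReal_mul (by positivity)]
  congr 1
  rw [Real.mul_rpow (by positivity) (by positivity), Real.mul_rpow (by positivity) (by positivity),
    ← Real.rpow_mul (by positivity), ← Real.rpow_mul (by positivity),
    ← Real.rpow_mul (by positivity), ← Real.rpow_mul (by positivity), hpq1,
    mul_one_div_cancel hp0.ne', Real.rpow_one]
  have e1 : p * (1 - 1 / p) = p - 1 := by field_simp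
  have e2 : 1 - (p - β) = (β - p) * (1 - 1 / p) + β * (1 / p) := by field_simp; ring
  rw [e1, e2, Real.rpow_add hd]
  ring
end

section
/- Let n ≥ 1, 1 < p < ∞ and β < p − 1, and let Ω ⊆ ℝⁿ be an open set whose complement Ω^c is nonempty and unbounded. Assume that the upper Assouad codimension of Ω^c is less than p − β, i.e. there exist 0 ≤ s < p − β and c₀ > 0 such that |(Ω^c)_r ∩ B(x,R)| ≥ c₀ (r/R)^s |B(x,R)| for every x ∈ Ω^c and all 0 < r < R < ∞. Then Ω admits a (p,β)-Hardy inequality: there exists C > 0 such that ∫_Ω |u(x)|^p d_Ω(x)^{β−p} dx ≤ C ∫_Ω ‖∇u(x)‖^p d_Ω(x)^β dx for every Lipschitz function u : ℝⁿ → ℝ with compact support contained in Ω. -/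
open MeasureTheory Metric ENNReal

lemma aux_ftc {n : ℕ} (u : EuclideanSpace ℝ (Fin n) → ℝ) (L : NNReal) (hu : LipschitzWith L u)
    (h : EuclideanSpace ℝ (Fin n)) :
    ∀ᵐ x : EuclideanSpace ℝ (Fin n), ENNReal.ofReal |u (x + h) - u x| ≤
      ∫⁻ τ in Set.Icc (0:ℝ) 1, ENNReal.ofReal (‖fderiv ℝ u (x + τ • h)‖ * ‖h‖) := by
  have hD : ∀ᵐ x : EuclideanSpace ℝ (Fin n), DifferentiableAt ℝ u x := hu.ae_differentiableAt
  have hτ : ∀ τ : ℝ, ∀ᵐ x : EuclideanSpace ℝ (Fin n), DifferentiableAt ℝ u (x + τ • h) := by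
    intro τ
    exact (measurePreserving_add_right volume (τ • h)).quasiMeasurePreserving.ae hD
  have hms : MeasurableSet {q : ℝ × EuclideanSpace ℝ (Fin n) |
      DifferentiableAt ℝ u (q.2 + q.1 • h)} := by
    have := measurableSet_of_differentiableAt ℝ u
    have hm : Measurable (fun q : ℝ × EuclideanSpace ℝ (Fin n) => q.2 + q.1 • h) := by fun_prop
    exact hm this
  have hx : ∀ᵐ x : EuclideanSpace ℝ (Fin n), ∀ᵐ τ : ℝ, DifferentiableAt ℝ u (x + τ • h) :=
    (Measure.ae_ae_comm (μ := (volume : Measure ℝ))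
      (ν := (volume : Measure (EuclideanSpace ℝ (Fin n)))) hms).1 (Filter.Eventually.of_forall hτ)
  filter_upwards [hx] with x hx
  have hlip : LipschitzWith (L * ‖h‖₊) (fun τ : ℝ => u (x + τ • h)) := by
    refine hu.comp (LipschitzWith.of_dist_le_mul fun a b => ?_)
    simp only [dist_add_left, coe_nnnorm]
    rw [dist_eq_norm, ← sub_smul, norm_smul, dist_eq_norm, mul_comm]
  have hac := (hlip.lipschitzOnWith (s := Set.uIcc 0 1)).absolutelyContinuousOnInterval
  have hI := hac.integral_deriv_eq_sub
  simp only [one_smul, zero_smul, add_zero] at hI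
  rw [← hI, ← Real.norm_eq_abs, ofReal_norm,
    intervalIntegral.integral_of_le zero_le_one]
  refine (enorm_integral_le_lintegral_enorm _).trans ?_
  rw [← restrict_Ioc_eq_restrict_Icc]
  refine lintegral_mono_ae ?_
  filter_upwards [ae_restrict_of_ae hx] with τ hτ
  have hd : HasDerivAt (fun τ : ℝ => u (x + τ • h)) (fderiv ℝ u (x + τ • h) h) τ := by
    have h1 : HasDerivAt (fun τ : ℝ => x + τ • h) h τ := by
      simpa using ((hasDerivAt_id τ).smul_const h).const_add x
    exact hτ.hasFDerivAt.comp_hasDerivAt τ h1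
  rw [hd.deriv, ← ofReal_norm]
  exact ENNReal.ofReal_le_ofReal (ContinuousLinearMap.le_opNorm _ _)

lemma aux_kernel {n : ℕ} (a : ℝ) (ha : 0 < a) :
    ∃ I : ℝ, 0 ≤ I ∧ ∀ t : ℝ, 0 < t →
      ∫⁻ z : EuclideanSpace ℝ (Fin n), ENNReal.ofReal ((t + ‖z‖) ^ (-(a + n))) ≤
        ENNReal.ofReal (I * t ^ (-a)) := by
  have hfin := finite_integral_one_add_norm (E := EuclideanSpace ℝ (Fin n)) (μ := volume)
    (r := a + n) (by simp [ha])
  refine ⟨(∫⁻ z : EuclideanSpace ℝ (Fin n), ENNReal.ofReal ((1 + ‖z‖) ^ (-(a + n)))).toReal,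
    ENNReal.toReal_nonneg, fun t ht => ?_⟩
  have hmap := Measure.map_addHaar_smul (volume : Measure (EuclideanSpace ℝ (Fin n)))
    (r := t⁻¹) (by positivity)
  have h1 : ∫⁻ z : EuclideanSpace ℝ (Fin n), ENNReal.ofReal ((1 + ‖t⁻¹ • z‖) ^ (-(a + n)))
      = ENNReal.ofReal (t ^ n) *
        ∫⁻ z : EuclideanSpace ℝ (Fin n), ENNReal.ofReal ((1 + ‖z‖) ^ (-(a + n))) := by
    rw [← lintegral_map (μ := (volume : Measure (EuclideanSpace ℝ (Fin n))))
      (f := fun z => ENNReal.ofReal ((1 + ‖z‖) ^ (-(a + n)))) (g := fun z => t⁻¹ • z)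
      (by fun_prop) (by fun_prop)]
    rw [hmap, lintegral_smul_measure]
    simp [abs_of_pos ht]
  have h2 : ∀ z : EuclideanSpace ℝ (Fin n), ENNReal.ofReal ((t + ‖z‖) ^ (-(a + n))) =
      ENNReal.ofReal (t ^ (-(a+n))) * ENNReal.ofReal ((1 + ‖t⁻¹ • z‖) ^ (-(a + n))) := by
    intro z
    rw [← ENNReal.ofReal_mul (by positivity), ← Real.mul_rpow ht.le (by positivity)]
    congr 2
    rw [norm_smul, Real.norm_of_nonneg (by positivity)]
    field_simp
  simp_rw [h2]
  rw [lintegral_const_mul _ (by fun_prop), h1, ← mul_assoc,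
    ← ENNReal.ofReal_mul (by positivity), ENNReal.ofReal_mul ENNReal.toReal_nonneg,
    ENNReal.ofReal_toReal hfin.ne, mul_comm]
  gcongr
  rw [← Real.rpow_natCast t n, ← Real.rpow_add ht]
  apply le_of_eq
  congr 1
  ring

lemma aux_fin {n : ℕ} (Ω : Set (EuclideanSpace ℝ (Fin n))) (hΩopen : IsOpen Ω)
    (hΩc : Ωᶜ.Nonempty) (γ : ℝ) (v : EuclideanSpace ℝ (Fin n) → ℝ) (hv : Continuous v)
    (hc : HasCompactSupport v) (hs : tsupport v ⊆ Ω) :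
    ∫⁻ x in Ω, ENNReal.ofReal (|v x| * infDist x Ωᶜ ^ γ) ≠ ∞ := by
  have hpos : ∀ x ∈ Ω, 0 < infDist x Ωᶜ := fun x hx =>
    (hΩopen.isClosed_compl.notMem_iff_infDist_pos hΩc).1 (by simpa using hx)
  have hcont : ContinuousOn (fun x => |v x| * infDist x Ωᶜ ^ γ) (tsupport v) := by
    refine hv.abs.continuousOn.mul ?_
    refine ContinuousOn.rpow_const (continuous_infDist_pt _).continuousOn ?_
    intro x hx
    exact Or.inl (hpos x (hs hx)).ne'
  have hint := hcont.integrableOn_compact (μ := volume) hc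
  have : ∫⁻ x in Ω, ENNReal.ofReal (|v x| * infDist x Ωᶜ ^ γ) ≤
      ∫⁻ x in tsupport v, ENNReal.ofReal (|v x| * infDist x Ωᶜ ^ γ) := by
    rw [← lintegral_indicator hΩopen.measurableSet,
      ← lintegral_indicator (isClosed_tsupport v).measurableSet]
    refine lintegral_mono fun x => ?_
    by_cases hx : x ∈ tsupport v
    · simp [hx, hs hx]
    · simp [hx, image_eq_zero_of_notMem_tsupport hx]
  refine (this.trans_lt ?_).ne
  exact hint.lintegral_lt_top

lemma aux_rpow_le {A B m r : ℝ} (hr : 0 ≤ r) (hm : 0 < m) (hB : 0 < B) (h : B ≤ m * A) :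
    A ^ (-r) ≤ m ^ r * B ^ (-r) := by
  have hA : 0 < A := by
    by_contra hA
    have : m * A ≤ 0 := mul_nonpos_of_nonneg_of_nonpos hm.le (not_lt.1 hA)
    linarith
  have h1 : (m * A) ^ (-r) ≤ B ^ (-r) := Real.rpow_le_rpow_of_nonpos hB h (by linarith)
  rw [Real.mul_rpow hm.le hA.le] at h1
  have h2 : m ^ r * m ^ (-r) = 1 := by rw [← Real.rpow_add hm]; simp
  calc A ^ (-r) = m ^ r * (m ^ (-r) * A ^ (-r)) := by rw [← mul_assoc, h2, one_mul]
    _ ≤ _ := by gcongr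

lemma aux_T1 {n : ℕ} (Ω : Set (EuclideanSpace ℝ (Fin n))) (hΩopen : IsOpen Ω)
    (hΩc : Ωᶜ.Nonempty) (γ : ℝ) (hγ : 0 < γ) :
    ∃ K : ℝ, 0 ≤ K ∧ ∀ ε : ℝ, 0 < ε → ∀ v : EuclideanSpace ℝ (Fin n) → ℝ, Continuous v →
      (∀ y ∉ Ω, v y = 0) →
      Measurable (fun x => ENNReal.ofReal (infDist x Ωᶜ ^ (-(γ + n))) *
        ∫⁻ y in thickening (ε * infDist x Ωᶜ) Ωᶜ ∩ closedBall x (2 * infDist x Ωᶜ),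
          ENNReal.ofReal |v y|) ∧
      ∫⁻ x in Ω, ENNReal.ofReal (infDist x Ωᶜ ^ (-(γ + n))) *
        ∫⁻ y in thickening (ε * infDist x Ωᶜ) Ωᶜ ∩ closedBall x (2 * infDist x Ωᶜ),
          ENNReal.ofReal |v y| ≤
      ENNReal.ofReal (K * ε ^ γ) *
        ∫⁻ y in Ω, ENNReal.ofReal (|v y| * infDist y Ωᶜ ^ (-γ)) := by
  obtain ⟨I, hI0, hI⟩ := aux_kernel (n := n) γ hγ
  refine ⟨4 ^ (γ + n) * I, by positivity, fun ε hε v hv hv0 => ?_⟩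
  set d : EuclideanSpace ℝ (Fin n) → ℝ := fun x => infDist x Ωᶜ with hd
  have hpos : ∀ x ∈ Ω, 0 < d x := fun x hx =>
    (hΩopen.isClosed_compl.notMem_iff_infDist_pos hΩc).1 (by simpa using hx)
  have hdc : Continuous d := continuous_infDist_pt _
  have hdm : Measurable d := hdc.measurable
  have hvm : Measurable v := hv.measurable
  let S : Set (EuclideanSpace ℝ (Fin n) × EuclideanSpace ℝ (Fin n)) :=
    {q | d q.2 < ε * d q.1 ∧ dist q.2 q.1 ≤ 2 * d q.1}
  have hS : MeasurableSet S := by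
    have e1 : Measurable fun q : EuclideanSpace ℝ (Fin n) × EuclideanSpace ℝ (Fin n) => d q.2 := by
      fun_prop
    have e2 : Measurable fun q : EuclideanSpace ℝ (Fin n) × EuclideanSpace ℝ (Fin n) =>
      ε * d q.1 := by fun_prop
    have e3 : Measurable fun q : EuclideanSpace ℝ (Fin n) × EuclideanSpace ℝ (Fin n) =>
      dist q.2 q.1 := by fun_prop
    have e4 : Measurable fun q : EuclideanSpace ℝ (Fin n) × EuclideanSpace ℝ (Fin n) =>
      2 * d q.1 := by fun_prop
    exact (measurableSet_lt e1 e2).inter (measurableSet_le e3 e4)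
  let f : EuclideanSpace ℝ (Fin n) → EuclideanSpace ℝ (Fin n) → ℝ≥0∞ := fun x y =>
    S.indicator (fun q => ENNReal.ofReal (d q.1 ^ (-(γ + n))) * ENNReal.ofReal |v q.2|) (x, y)
  have hf : Measurable (Function.uncurry f) := by
    have : Function.uncurry f = S.indicator
      (fun q => ENNReal.ofReal (d q.1 ^ (-(γ + n))) * ENNReal.ofReal |v q.2|) := by
      ext q; rfl
    rw [this]
    refine Measurable.indicator ?_ hS
    fun_prop
  have h1 : ∀ x, ENNReal.ofReal (d x ^ (-(γ + n))) *
        ∫⁻ y in thickening (ε * d x) Ωᶜ ∩ closedBall x (2 * d x), ENNReal.ofReal |v y| =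
        ∫⁻ y, f x y := by
    intro x
    rw [← lintegral_const_mul _ (by fun_prop),
      ← lintegral_indicator (isOpen_thickening.measurableSet.inter isClosed_closedBall.measurableSet)]
    refine lintegral_congr fun y => ?_
    have hiff : y ∈ thickening (ε * d x) Ωᶜ ∩ closedBall x (2 * d x) ↔ (x, y) ∈ S := by
      rw [Set.mem_inter_iff, mem_closedBall, mem_thickening_iff_infDist_lt hΩc]
      rfl
    by_cases hh : (x, y) ∈ S
    · simp only [f, Set.indicator_of_mem hh, Set.indicator_of_mem (hiff.2 hh)]
    · simp only [f, Set.indicator_of_notMem hh, Set.indicator_of_notMem (fun h => hh (hiff.1 h))]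
  refine ⟨?_, ?_⟩
  · have h2 := funext h1
    have h3 : Measurable fun x => ∫⁻ y, f x y := hf.lintegral_prod_right'
    rw [← h2] at h3
    exact h3
  calc ∫⁻ x in Ω, ENNReal.ofReal (d x ^ (-(γ + n))) *
        ∫⁻ y in thickening (ε * d x) Ωᶜ ∩ closedBall x (2 * d x), ENNReal.ofReal |v y|
      = ∫⁻ x in Ω, ∫⁻ y, f x y := by simp_rw [h1]
    _ ≤ ∫⁻ x, ∫⁻ y, f x y := setLIntegral_le_lintegral _ _
    _ = ∫⁻ y, ∫⁻ x, f x y := lintegral_lintegral_swap hf.aemeasurable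
    _ ≤ ∫⁻ y, Ω.indicator (fun y => ENNReal.ofReal (4 ^ (γ + n) * I * ε ^ γ) *
          ENNReal.ofReal (|v y| * d y ^ (-γ))) y := by
        refine lintegral_mono fun y => ?_
        by_cases hy : y ∈ Ω
        swap
        · have : ∀ x, f x y = 0 := by
            intro x
            simp [f, Set.indicator_apply, hv0 y hy]
          simp [this]
        · have hdy := hpos y hy
          rw [Set.indicator_of_mem hy]
          have hdy' : 0 < d y / ε := div_pos hdy hε
          have hb : ∀ x, f x y ≤ ENNReal.ofReal (|v y| * 4 ^ (γ + n)) *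
              ENNReal.ofReal ((d y / ε + ‖x - y‖) ^ (-(γ + n))) := by
            intro x
            simp only [f, Set.indicator_apply]
            split_ifs with hx
            · obtain ⟨hx1, hx2⟩ := hx
              simp only at hx1 hx2
              rw [← ENNReal.ofReal_mul' (abs_nonneg _), ← ENNReal.ofReal_mul (by positivity)]
              apply ENNReal.ofReal_le_ofReal
              have : d x ^ (-(γ + n)) ≤ 4 ^ (γ + n) * (d y / ε + ‖x - y‖) ^ (-(γ + n)) := by
                refine aux_rpow_le (by positivity) (by norm_num) (by positivity) ?_
                have h3 : d y / ε < d x := by rw [div_lt_iff₀ hε]; linarith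
                rw [dist_comm, dist_eq_norm] at hx2
                linarith
              calc d x ^ (-(γ + n)) * |v y| ≤
                  (4 ^ (γ + n) * (d y / ε + ‖x - y‖) ^ (-(γ + n))) * |v y| := by gcongr
                _ = _ := by ring
            · exact zero_le
          refine (lintegral_mono hb).trans ?_
          rw [lintegral_const_mul _ (by fun_prop),
            lintegral_sub_right_eq_self
              (fun z => ENNReal.ofReal ((d y / ε + ‖z‖) ^ (-(γ + n)))) y]
          refine (mul_le_mul_right (hI _ hdy') _).trans ?_
          rw [← ENNReal.ofReal_mul (by positivity), ← ENNReal.ofReal_mul (by positivity)]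
          apply ENNReal.ofReal_le_ofReal
          apply le_of_eq
          rw [Real.div_rpow hdy.le hε.le, Real.rpow_neg hε.le]
          field_simp
    _ = _ := by
        rw [lintegral_indicator hΩopen.measurableSet, lintegral_const_mul _ (by fun_prop)]

set_option maxHeartbeats 400000 in
lemma aux_T2 {n : ℕ} (Ω : Set (EuclideanSpace ℝ (Fin n))) (hΩopen : IsOpen Ω)
    (hΩc : Ωᶜ.Nonempty) (γ : ℝ) (hγ : 1 < γ) :
    ∃ K : ℝ, 0 ≤ K ∧ ∀ v : EuclideanSpace ℝ (Fin n) → ℝ, (∃ L : NNReal, LipschitzWith L v) →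
      tsupport v ⊆ Ω →
      ∫⁻ x in Ω, ENNReal.ofReal (infDist x Ωᶜ ^ (-(γ + n))) *
        ∫⁻ y in closedBall x (2 * infDist x Ωᶜ), ENNReal.ofReal |v x - v y| ≤
      ENNReal.ofReal K *
        ∫⁻ z in Ω, ENNReal.ofReal (‖fderiv ℝ v z‖ * infDist z Ωᶜ ^ (1 - γ)) := by
  obtain ⟨I, hI0, hI⟩ := aux_kernel (n := n) (γ - 1) (by linarith)
  refine ⟨6 ^ (γ + n) * I, by positivity, fun v ⟨L, hL⟩ hvs => ?_⟩
  set d : EuclideanSpace ℝ (Fin n) → ℝ := fun x => infDist x Ωᶜ with hd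
  have hpos : ∀ x ∈ Ω, 0 < d x := fun x hx =>
    (hΩopen.isClosed_compl.notMem_iff_infDist_pos hΩc).1 (by simpa using hx)
  have hdc : Continuous d := continuous_infDist_pt _
  have hdm : Measurable d := hdc.measurable
  have hd0 : ∀ x, 0 ≤ d x := fun x => infDist_nonneg
  have hvm : Measurable v := hL.continuous.measurable
  set g : EuclideanSpace ℝ (Fin n) → ℝ := fun x => ‖fderiv ℝ v x‖ with hg
  have hgm : Measurable g := (measurable_fderiv ℝ v).norm
  have hg0 : ∀ x, 0 ≤ g x := fun x => norm_nonneg _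
  have hgz : ∀ z ∉ Ω, g z = 0 := by
    intro z hz
    have : z ∉ tsupport v := fun h => hz (hvs h)
    have h2 : fderiv ℝ v z = 0 := fderiv_of_notMem_tsupport ℝ this
    simp [hg, h2]
  let S : Set (EuclideanSpace ℝ (Fin n) × EuclideanSpace ℝ (Fin n)) :=
    {q | 0 < d q.1 ∧ ‖q.2‖ ≤ 2 * d q.1}
  have hS : MeasurableSet S := by
    have e2 : Measurable fun q : EuclideanSpace ℝ (Fin n) × EuclideanSpace ℝ (Fin n) =>
      d q.1 := by fun_prop
    have e3 : Measurable fun q : EuclideanSpace ℝ (Fin n) × EuclideanSpace ℝ (Fin n) =>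
      ‖q.2‖ := by fun_prop
    have e4 : Measurable fun q : EuclideanSpace ℝ (Fin n) × EuclideanSpace ℝ (Fin n) =>
      2 * d q.1 := by fun_prop
    exact (measurableSet_lt measurable_const e2).inter (measurableSet_le e3 e4)
  let k : EuclideanSpace ℝ (Fin n) → EuclideanSpace ℝ (Fin n) → ℝ≥0∞ := fun x h =>
    S.indicator (fun q => ENNReal.ofReal (d q.1 ^ (-(γ + n)))) (x, h)
  have hk : Measurable (Function.uncurry k) := by
    have : Function.uncurry k = S.indicator
      (fun q => ENNReal.ofReal (d q.1 ^ (-(γ + n)))) := by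
      ext q; rfl
    rw [this]
    refine Measurable.indicator ?_ hS
    fun_prop
  let ψ : EuclideanSpace ℝ (Fin n) → EuclideanSpace ℝ (Fin n) → ℝ≥0∞ := fun h z =>
    ENNReal.ofReal (g z) * ENNReal.ofReal ((d z + ‖h‖) ^ (-(γ - 1 + n)))
  have hψ : Measurable (Function.uncurry ψ) := by
    simp only [ψ, Function.uncurry_def]
    fun_prop
  have h1 : ∀ x ∈ Ω, ENNReal.ofReal (d x ^ (-(γ + n))) *
        ∫⁻ y in closedBall x (2 * d x), ENNReal.ofReal |v x - v y| =
        ∫⁻ h, k x h * ENNReal.ofReal |v (x + h) - v x| := by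
    intro x hx
    rw [← lintegral_const_mul _ (by fun_prop),
      ← lintegral_indicator isClosed_closedBall.measurableSet,
      ← lintegral_add_left_eq_self _ x]
    refine lintegral_congr fun y => ?_
    have hiff : x + y ∈ closedBall x (2 * d x) ↔ (x, y) ∈ S := by
      rw [mem_closedBall, dist_self_add_left]
      exact ⟨fun h => ⟨hpos x hx, h⟩, fun h => h.2⟩
    by_cases hh : (x, y) ∈ S
    · simp only [k, Set.indicator_of_mem hh, Set.indicator_of_mem (hiff.2 hh), abs_sub_comm (v x)]
    · simp only [k, Set.indicator_of_notMem hh, Set.indicator_of_notMem (fun h => hh (hiff.1 h)),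
        zero_mul]
  have hkey : ∀ x h, ∀ τ ∈ Set.Icc (0:ℝ) 1, k x h * ENNReal.ofReal (g (x + τ • h) * ‖h‖) ≤
      ENNReal.ofReal (6 ^ (γ + n)) * ψ h (x + τ • h) := by
    intro x h τ hτ
    simp only [k, Set.indicator_apply]
    split_ifs with hx
    swap
    · simp
    obtain ⟨hx1, hx2⟩ := hx
    simp only at hx1 hx2
    set z := x + τ • h with hz
    by_cases hzΩ : z ∈ Ω
    swap
    · simp [hgz z hzΩ]
    have hdz := hpos z hzΩ
    have hdz2 : d z ≤ d x + ‖h‖ := by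
      have h3 : d z ≤ d x + dist z x := infDist_le_infDist_add_dist
      have h4 : dist z x ≤ ‖h‖ := by
        rw [hz, dist_self_add_left, norm_smul, Real.norm_of_nonneg hτ.1]
        exact mul_le_of_le_one_left (norm_nonneg _) hτ.2
      linarith
    have h5 : d x ^ (-(γ + n)) ≤ 6 ^ (γ + n) * (d z + ‖h‖) ^ (-(γ + n)) := by
      refine aux_rpow_le (by positivity) (by norm_num) (add_pos_of_pos_of_nonneg hdz (norm_nonneg _)) ?_
      linarith
    have hdz' : 0 < d z + ‖h‖ := add_pos_of_pos_of_nonneg hdz (norm_nonneg _)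
    have h6 : (d z + ‖h‖) ^ (-(γ + n)) * ‖h‖ ≤ (d z + ‖h‖) ^ (-(γ - 1 + n)) := by
      have : -(γ - 1 + (n:ℝ)) = -(γ + n) + 1 := by ring
      rw [this, Real.rpow_add_one hdz'.ne']
      gcongr
      linarith
    simp only [ψ]
    rw [← ENNReal.ofReal_mul (by positivity), ← ENNReal.ofReal_mul (hg0 _),
      ← ENNReal.ofReal_mul (by positivity)]
    apply ENNReal.ofReal_le_ofReal
    have hgz0 := hg0 z
    calc d x ^ (-(γ + n)) * (g z * ‖h‖) ≤
        (6 ^ (γ + n) * (d z + ‖h‖) ^ (-(γ + n))) * (g z * ‖h‖) := by gcongr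
      _ = 6 ^ (γ + n) * (g z * ((d z + ‖h‖) ^ (-(γ + n)) * ‖h‖)) := by ring
      _ ≤ _ := by gcongr
  have hinner : ∀ h, ∫⁻ x, k x h * ENNReal.ofReal |v (x + h) - v x| ≤
      ENNReal.ofReal (6 ^ (γ + n)) * ∫⁻ z, ψ h z := by
    intro h
    have hψh : Measurable (ψ h) := hψ.of_uncurry_left
    calc ∫⁻ x, k x h * ENNReal.ofReal |v (x + h) - v x|
        ≤ ∫⁻ x, k x h * ∫⁻ τ in Set.Icc (0:ℝ) 1, ENNReal.ofReal (g (x + τ • h) * ‖h‖) := by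
          refine lintegral_mono_ae ?_
          filter_upwards [aux_ftc v L hL h] with x hx
          exact mul_le_mul_right hx _
      _ = ∫⁻ x, ∫⁻ τ in Set.Icc (0:ℝ) 1, k x h * ENNReal.ofReal (g (x + τ • h) * ‖h‖) := by
          refine lintegral_congr fun x => ?_
          rw [lintegral_const_mul _ (by fun_prop)]
      _ ≤ ∫⁻ x, ∫⁻ τ in Set.Icc (0:ℝ) 1, ENNReal.ofReal (6 ^ (γ + n)) * ψ h (x + τ • h) := by
          refine lintegral_mono fun x => setLIntegral_mono' measurableSet_Icc fun τ hτ => ?_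
          exact hkey x h τ hτ
      _ = ∫⁻ τ in Set.Icc (0:ℝ) 1, ∫⁻ x, ENNReal.ofReal (6 ^ (γ + n)) * ψ h (x + τ • h) := by
          refine lintegral_lintegral_swap ?_
          refine Measurable.aemeasurable ?_
          simp only [Function.uncurry_def]
          fun_prop
      _ = ∫⁻ τ in Set.Icc (0:ℝ) 1, ENNReal.ofReal (6 ^ (γ + n)) * ∫⁻ z, ψ h z := by
          refine lintegral_congr fun τ => ?_
          rw [lintegral_const_mul _ (by fun_prop), lintegral_add_right_eq_self (ψ h)]
      _ = _ := by simp
  calc ∫⁻ x in Ω, ENNReal.ofReal (d x ^ (-(γ + n))) *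
        ∫⁻ y in closedBall x (2 * d x), ENNReal.ofReal |v x - v y|
      = ∫⁻ x in Ω, ∫⁻ h, k x h * ENNReal.ofReal |v (x + h) - v x| :=
        setLIntegral_congr_fun hΩopen.measurableSet h1
    _ ≤ ∫⁻ x, ∫⁻ h, k x h * ENNReal.ofReal |v (x + h) - v x| := setLIntegral_le_lintegral _ _
    _ = ∫⁻ h, ∫⁻ x, k x h * ENNReal.ofReal |v (x + h) - v x| := by
        refine lintegral_lintegral_swap ?_
        refine Measurable.aemeasurable ?_
        simp only [Function.uncurry_def]
        refine Measurable.mul hk ?_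
        fun_prop
    _ ≤ ∫⁻ h, ENNReal.ofReal (6 ^ (γ + n)) * ∫⁻ z, ψ h z := lintegral_mono hinner
    _ = ENNReal.ofReal (6 ^ (γ + n)) * ∫⁻ h, ∫⁻ z, ψ h z := by
        rw [lintegral_const_mul]
        exact hψ.lintegral_prod_right'
    _ = ENNReal.ofReal (6 ^ (γ + n)) * ∫⁻ z, ∫⁻ h, ψ h z := by
        rw [lintegral_lintegral_swap hψ.aemeasurable]
    _ ≤ ENNReal.ofReal (6 ^ (γ + n)) * ∫⁻ z, Ω.indicator (fun z => ENNReal.ofReal I *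
          ENNReal.ofReal (g z * d z ^ (1 - γ))) z := by
        refine mul_le_mul_right (lintegral_mono fun z => ?_) _
        by_cases hz : z ∈ Ω
        swap
        · simp [ψ, hgz z hz]
        rw [Set.indicator_of_mem hz]
        simp only [ψ]
        rw [lintegral_const_mul _ (by fun_prop)]
        refine (mul_le_mul_right (hI _ (hpos z hz)) _).trans ?_
        rw [← ENNReal.ofReal_mul (hg0 _), ← ENNReal.ofReal_mul hI0]
        apply ENNReal.ofReal_le_ofReal
        apply le_of_eq
        rw [neg_sub]
        ring
    _ = _ := by
        rw [lintegral_indicator hΩopen.measurableSet, lintegral_const_mul _ (by fun_prop),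
          ← mul_assoc, ← ENNReal.ofReal_mul (by positivity)]

lemma aux_absorb (F G : ℝ≥0∞) (hF : F ≠ ∞) (a m k : ℝ) (hm : 0 < m) (ha : a ≤ m / 2)
    (hk : 0 ≤ k) (h : ENNReal.ofReal m * F ≤ ENNReal.ofReal a * F + ENNReal.ofReal k * G) :
    F ≤ ENNReal.ofReal (2 * (k + 1) / m) * G := by
  have hC : 0 < 2 * (k + 1) / m := by positivity
  by_cases hG : G = ∞
  · rw [hG, ENNReal.mul_top (by simpa using hC)]
    exact le_top
  lift F to NNReal using hF
  lift G to NNReal using hG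
  have h' : ENNReal.ofReal m * F ≤ ENNReal.ofReal (m / 2) * F + ENNReal.ofReal k * G :=
    h.trans (by gcongr)
  rw [← ENNReal.ofReal_coe_nnreal (p := F), ← ENNReal.ofReal_coe_nnreal (p := G)] at h' ⊢
  have hF0 : (0:ℝ) ≤ F := F.2
  have hG0 : (0:ℝ) ≤ G := G.2
  rw [← ENNReal.ofReal_mul hm.le, ← ENNReal.ofReal_mul (by positivity), ← ENNReal.ofReal_mul hk,
    ← ENNReal.ofReal_add (by positivity) (by positivity),
    ENNReal.ofReal_le_ofReal_iff (by positivity)] at h'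
  rw [← ENNReal.ofReal_mul hC.le]
  apply ENNReal.ofReal_le_ofReal
  rw [div_mul_eq_mul_div, le_div_iff₀ hm]
  nlinarith

lemma aux_one {n : ℕ} (Ω : Set (EuclideanSpace ℝ (Fin n))) (hΩopen : IsOpen Ω)
    (hΩc : Ωᶜ.Nonempty) (γ : ℝ) (hγ : 1 < γ) (s c₀ : ℝ) (hs : s < γ) (hc₀ : 0 < c₀)
    (hthick : ∀ x ∈ Ωᶜ, ∀ r R : ℝ, 0 < r → r < R →
      ENNReal.ofReal (c₀ * (r / R) ^ s) * volume (Metric.closedBall x R) ≤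
        volume (Metric.thickening r Ωᶜ ∩ Metric.closedBall x R)) :
    ∃ C : ℝ, 0 < C ∧ ∀ v : EuclideanSpace ℝ (Fin n) → ℝ, (∃ L : NNReal, LipschitzWith L v) →
      HasCompactSupport v → tsupport v ⊆ Ω →
      ∫⁻ x in Ω, ENNReal.ofReal (|v x| * infDist x Ωᶜ ^ (-γ)) ≤
      ENNReal.ofReal C *
        ∫⁻ z in Ω, ENNReal.ofReal (‖fderiv ℝ v z‖ * infDist z Ωᶜ ^ (1 - γ)) := by
  obtain ⟨K1, hK1, H1⟩ := aux_T1 Ω hΩopen hΩc γ (by linarith)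
  obtain ⟨K2, hK2, H2⟩ := aux_T2 Ω hΩopen hΩc γ hγ
  obtain ⟨ω, hω, hωe⟩ : ∃ ω : ℝ, 0 < ω ∧
      volume (ball (0 : EuclideanSpace ℝ (Fin n)) 1) = ENNReal.ofReal ω := by
    have hfin : volume (ball (0 : EuclideanSpace ℝ (Fin n)) 1) ≠ ∞ := measure_ball_lt_top.ne
    have hp : volume (ball (0 : EuclideanSpace ℝ (Fin n)) 1) ≠ 0 :=
      (measure_ball_pos volume _ one_pos).ne'
    exact ⟨_, ENNReal.toReal_pos hp hfin, (ENNReal.ofReal_toReal hfin).symm⟩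
  -- choice of ε
  obtain ⟨ε, hε0, hε1, hε⟩ : ∃ ε : ℝ, 0 < ε ∧ ε < 1 ∧ K1 * ε ^ γ ≤ (c₀ * ε ^ s * ω) / 2 := by
    set δ : ℝ := c₀ * ω / (2 * (K1 + 1)) with hδ
    have hδ0 : 0 < δ := by positivity
    have hgs : 0 < γ - s := by linarith
    refine ⟨min (1/2) (δ ^ (γ - s)⁻¹), by positivity, ?_, ?_⟩
    · exact (min_le_left _ _).trans_lt (by norm_num)
    set ε : ℝ := min (1/2) (δ ^ (γ - s)⁻¹) with hεd
    have hε0 : 0 < ε := by positivity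
    have h1 : ε ^ (γ - s) ≤ δ := by
      calc ε ^ (γ - s) ≤ (δ ^ (γ - s)⁻¹) ^ (γ - s) :=
            Real.rpow_le_rpow hε0.le (min_le_right _ _) hgs.le
        _ = δ := Real.rpow_inv_rpow hδ0.le hgs.ne'
    have h2 : ε ^ γ = ε ^ (γ - s) * ε ^ s := by rw [← Real.rpow_add hε0]; simp
    have h3 : (K1 + 1) * δ = c₀ * ω / 2 := by rw [hδ]; field_simp
    have h4 : K1 * ε ^ (γ - s) ≤ c₀ * ω / 2 := by
      rw [← h3]
      gcongr
      linarith
    have h5 : 0 < ε ^ s := by positivity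
    rw [h2]
    nlinarith
  have hm : 0 < c₀ * ε ^ s * ω := by positivity
  refine ⟨2 * (K2 + 1) / (c₀ * ε ^ s * ω), by positivity, fun v hvL hvc hvs => ?_⟩
  have hvcont : Continuous v := by
    obtain ⟨L, hL⟩ := hvL
    exact hL.continuous
  have hv0 : ∀ y ∉ Ω, v y = 0 := fun y hy => image_eq_zero_of_notMem_tsupport (fun h => hy (hvs h))
  have hF := aux_fin Ω hΩopen hΩc (-γ) v hvcont hvc hvs
  refine aux_absorb _ _ hF _ _ _ hm hε hK2 ?_
  refine le_trans ?_ (add_le_add (H1 ε hε0 v hvcont hv0).2 (H2 v hvL hvs))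
  have hdm : Measurable (fun x => infDist x Ωᶜ) := (continuous_infDist_pt Ωᶜ).measurable
  have hvm := hvcont.measurable
  rw [← lintegral_const_mul _ (by fun_prop)]
  rw [← lintegral_add_left (H1 ε hε0 v hvcont hv0).1]
  refine setLIntegral_mono' hΩopen.measurableSet fun x hx => ?_
  have hpos : 0 < infDist x Ωᶜ :=
    (hΩopen.isClosed_compl.notMem_iff_infDist_pos hΩc).1 (by simpa using hx)
  obtain ⟨w, hw, hwd⟩ := hΩopen.isClosed_compl.exists_infDist_eq_dist hΩc x
  set R := infDist x Ωᶜ with hR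
  set A := thickening (ε * R) Ωᶜ ∩ closedBall x (2 * R) with hA
  have hvol : ENNReal.ofReal (c₀ * ε ^ s * ω * R ^ n) ≤ volume A := by
    have h1 := hthick w hw (ε * R) R (by positivity) (by nlinarith)
    rw [mul_div_assoc, div_self hpos.ne', mul_one,
      Measure.addHaar_closedBall _ _ hpos.le, hωe, ← ENNReal.ofReal_mul (by positivity),
      ← ENNReal.ofReal_mul (by positivity)] at h1
    have h2 : closedBall w R ⊆ closedBall x (2 * R) := by
      apply closedBall_subset_closedBall'
      rw [dist_comm, ← hwd]; linarith
    refine le_trans (le_of_eq ?_) (h1.trans (measure_mono (Set.inter_subset_inter_right _ h2)))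
    congr 1
    simp only [finrank_euclideanSpace, Fintype.card_fin]
    ring
  have hpt : ENNReal.ofReal |v x| * volume A ≤
      (∫⁻ y in A, ENNReal.ofReal |v y|) + ∫⁻ y in closedBall x (2 * R), ENNReal.ofReal |v x - v y| := by
    calc ENNReal.ofReal |v x| * volume A = ∫⁻ y in A, ENNReal.ofReal |v x| := by simp
      _ ≤ ∫⁻ y in A, (ENNReal.ofReal |v y| + ENNReal.ofReal |v x - v y|) := by
          refine lintegral_mono fun y => ?_
          rw [← ENNReal.ofReal_add (abs_nonneg _) (abs_nonneg _)]
          apply ENNReal.ofReal_le_ofReal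
          have := abs_add_le (v y) (v x - v y)
          simpa using this
      _ = (∫⁻ y in A, ENNReal.ofReal |v y|) + ∫⁻ y in A, ENNReal.ofReal |v x - v y| :=
          lintegral_add_left (by fun_prop) _
      _ ≤ _ := by
          gcongr
          exact Set.inter_subset_right
  rw [← mul_add]
  calc ENNReal.ofReal (c₀ * ε ^ s * ω) * ENNReal.ofReal (|v x| * R ^ (-γ))
      = ENNReal.ofReal (R ^ (-(γ + n))) * (ENNReal.ofReal |v x| *
          ENNReal.ofReal (c₀ * ε ^ s * ω * R ^ n)) := by
        rw [← ENNReal.ofReal_mul (by positivity), ← ENNReal.ofReal_mul (by positivity),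
          ← ENNReal.ofReal_mul (by positivity)]
        congr 1
        have : R ^ (-γ) = R ^ (-(γ + n)) * R ^ n := by
          rw [← Real.rpow_natCast R n, ← Real.rpow_add hpos]
          congr 1; ring
        rw [this]; ring
    _ ≤ ENNReal.ofReal (R ^ (-(γ + n))) * (ENNReal.ofReal |v x| * volume A) := by gcongr
    _ ≤ _ := by gcongr

lemma aux_lip_rpow {n : ℕ} (p : ℝ) (hp : 1 < p) (u : EuclideanSpace ℝ (Fin n) → ℝ) (L : NNReal)
    (hu : LipschitzWith L u) (hc : HasCompactSupport u) :
    ∃ L' : NNReal, LipschitzWith L' (fun x => |u x| ^ p) := by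
  obtain ⟨M, hM⟩ := hc.exists_bound_of_continuous hu.continuous
  have hM0 : 0 ≤ M := (norm_nonneg _).trans (hM 0)
  let K : NNReal := ⟨p * M ^ (p - 1), by positivity⟩
  have h1 : LipschitzOnWith K (fun t : ℝ => |t| ^ p) (Set.Icc (-M) M) := by
    refine Convex.lipschitzOnWith_of_nnnorm_deriv_le (𝕜 := ℝ)
      (fun t _ => (hasDerivAt_abs_rpow t hp).differentiableAt) ?_ (convex_Icc _ _)
    intro t ht
    rw [← NNReal.coe_le_coe, coe_nnnorm, (hasDerivAt_abs_rpow t hp).deriv]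
    change _ ≤ p * M ^ (p - 1)
    have htM : |t| ≤ M := abs_le.2 ht
    rw [norm_mul, norm_mul, Real.norm_of_nonneg (by linarith : (0:ℝ) ≤ p),
      Real.norm_of_nonneg (by positivity), Real.norm_eq_abs, mul_assoc]
    have : |t| ^ (p - 2) * |t| ≤ M ^ (p - 1) := by
      rcases eq_or_lt_of_le (abs_nonneg t) with h0 | h0
      · rw [← h0, mul_zero]; positivity
      · rw [← Real.rpow_add_one h0.ne', show p - 2 + 1 = p - 1 by ring]
        exact Real.rpow_le_rpow h0.le htM (by linarith)
    gcongr
  refine ⟨K * L, ?_⟩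
  have h2 := h1.comp (hu.lipschitzOnWith (s := Set.univ)) (fun x _ => abs_le.1 (hM x))
  exact lipschitzOnWith_univ.1 h2

lemma aux_young (p K t g : ℝ) (hp : 1 < p) (hK : 0 ≤ K) (ht : 0 ≤ t) (hg : 0 ≤ g) :
    2 * (K * (t ^ (p - 1) * g)) ≤ t ^ p + 2 * (K * (2 * K) ^ (p - 1)) * g ^ p := by
  have hsplit : ∀ a : ℝ, 0 ≤ a → a ^ p = a ^ (p - 1) * a := by
    intro a ha
    rcases eq_or_lt_of_le ha with h | h
    · rw [← h, Real.zero_rpow (by linarith)]; simp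
    · rw [← Real.rpow_add_one h.ne']; simp
  rcases le_total (2 * K * g) t with h | h
  · have h1 : 0 ≤ 2 * (K * (2 * K) ^ (p - 1)) * g ^ p := by positivity
    have h2 : t ^ (p - 1) * (2 * K * g) ≤ t ^ (p - 1) * t := by gcongr
    rw [hsplit t ht]
    linarith
  · have h1 : t ^ (p - 1) ≤ (2 * K * g) ^ (p - 1) := Real.rpow_le_rpow ht h (by linarith)
    rw [Real.mul_rpow (by positivity) hg] at h1
    have h2 : 2 * (K * (t ^ (p - 1) * g)) ≤ 2 * (K * (((2 * K) ^ (p - 1) * g ^ (p - 1)) * g)) := by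
      gcongr
    have h3 : 0 ≤ t ^ p := by positivity
    rw [hsplit g hg]
    linarith

/-- Euclidean case of Theorem 1.2: if the upper Assouad codimension of
`Ωᶜ` is less than `p - β` (with `β < p - 1`) and `Ωᶜ` is unbounded, then `Ω` admits a
`(p,β)`-Hardy inequality. -/
theorem hardy_of_upper_assouad_codim_lt
    (n : ℕ) (hn : 1 ≤ n) (p β : ℝ) (hp : 1 < p) (hβ : β < p - 1)
    (Ω : Set (EuclideanSpace ℝ (Fin n))) (hΩopen : IsOpen Ω) (hΩc : Ωᶜ.Nonempty)
    (hΩcUnb : ¬ Bornology.IsBounded Ωᶜ)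
    (s c₀ : ℝ) (hs0 : 0 ≤ s) (hs : s < p - β) (hc₀ : 0 < c₀)
    (hthick : ∀ x ∈ Ωᶜ, ∀ r R : ℝ, 0 < r → r < R →
      ENNReal.ofReal (c₀ * (r / R) ^ s) * volume (Metric.closedBall x R) ≤
        volume (Metric.thickening r Ωᶜ ∩ Metric.closedBall x R)) :
    ∃ C : ℝ, 0 < C ∧ ∀ u : EuclideanSpace ℝ (Fin n) → ℝ,
      (∃ L : NNReal, LipschitzWith L u) → HasCompactSupport u → tsupport u ⊆ Ω →
      ∫⁻ x in Ω, ENNReal.ofReal (|u x| ^ p * Metric.infDist x Ωᶜ ^ (β - p)) ≤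
        ENNReal.ofReal C *
          ∫⁻ x in Ω, ENNReal.ofReal (‖fderiv ℝ u x‖ ^ p * Metric.infDist x Ωᶜ ^ β) := by
  obtain ⟨C, hC, H⟩ := aux_one Ω hΩopen hΩc (p - β) (by linarith) s c₀ hs hc₀ hthick
  set K : ℝ := C * p with hK
  have hK0 : 0 < K := by positivity
  set k : ℝ := 2 * (K * (2 * K) ^ (p - 1)) with hk
  have hk0 : 0 < k := by positivity
  refine ⟨2 * (k + 1) / 2, by positivity, ?_⟩
  rintro u ⟨L, hL⟩ huc hus
  set v : EuclideanSpace ℝ (Fin n) → ℝ := fun x => |u x| ^ p with hv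
  have hsub : Function.support v ⊆ Function.support u := by
    intro x hx hx0
    apply hx
    simp [hv, hx0, Real.zero_rpow (by linarith : p ≠ 0)]
  have hts : tsupport v ⊆ tsupport u := closure_mono hsub
  have hvL : ∃ L' : NNReal, LipschitzWith L' v := aux_lip_rpow p hp u L hL huc
  have hvc : HasCompactSupport v := huc.mono hsub
  have hvabs : ∀ x, |v x| = |u x| ^ p := fun x => abs_of_nonneg (by positivity)
  have hvcont : Continuous v := by
    obtain ⟨L', hL'⟩ := hvL
    exact hL'.continuous
  have hF := aux_fin Ω hΩopen hΩc (β - p) v hvcont hvc (hts.trans hus)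
  have HH := H v hvL hvc (hts.trans hus)
  rw [neg_sub] at HH
  simp only [hvabs] at HH hF
  refine aux_absorb _ _ hF 1 2 k (by norm_num) (by norm_num) hk0.le ?_
  have hdm : Measurable (fun x => infDist x Ωᶜ) := (continuous_infDist_pt Ωᶜ).measurable
  have hum : Measurable u := hL.continuous.measurable
  have hgm : Measurable (fun x => ‖fderiv ℝ u x‖) := (measurable_fderiv ℝ u).norm
  have hgm' : Measurable (fun x => ‖fderiv ℝ v x‖) := (measurable_fderiv ℝ v).norm
  refine (mul_le_mul_right HH _).trans ?_
  rw [← mul_assoc, ← ENNReal.ofReal_mul (by norm_num), ← lintegral_const_mul _ (by fun_prop),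
    ← lintegral_const_mul _ (by fun_prop), ← lintegral_const_mul _ (by fun_prop),
    ← lintegral_add_left (by fun_prop)]
  have hD : ∀ᵐ x : EuclideanSpace ℝ (Fin n), DifferentiableAt ℝ u x := hL.ae_differentiableAt
  refine lintegral_mono_ae ?_
  filter_upwards [ae_restrict_of_ae hD, ae_restrict_mem hΩopen.measurableSet] with x hx hxΩ
  have hpos : 0 < infDist x Ωᶜ :=
    (hΩopen.isClosed_compl.notMem_iff_infDist_pos hΩc).1 (by simpa using hxΩ)
  set R := infDist x Ωᶜ with hR
  have hder : HasFDerivAt v ((p * |u x| ^ (p - 2) * u x) • fderiv ℝ u x) x :=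
    (hasDerivAt_abs_rpow (u x) hp).comp_hasFDerivAt x hx.hasFDerivAt
  have hnorm : ‖fderiv ℝ v x‖ ≤ p * |u x| ^ (p - 1) * ‖fderiv ℝ u x‖ := by
    rw [hder.fderiv, norm_smul]
    gcongr
    rw [norm_mul, norm_mul, Real.norm_of_nonneg (by linarith : (0:ℝ) ≤ p),
      Real.norm_of_nonneg (by positivity), Real.norm_eq_abs, mul_assoc]
    gcongr
    rcases eq_or_lt_of_le (abs_nonneg (u x)) with h0 | h0
    · rw [← h0, mul_zero]; positivity
    · rw [← Real.rpow_add_one h0.ne', show p - 2 + 1 = p - 1 by ring]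
  rw [← ENNReal.ofReal_mul (by positivity), ← ENNReal.ofReal_mul (by positivity),
    ← ENNReal.ofReal_mul (by positivity),
    ← ENNReal.ofReal_add (by positivity) (by positivity)]
  apply ENNReal.ofReal_le_ofReal
  set g := ‖fderiv ℝ u x‖ with hg
  have hg0 : 0 ≤ g := norm_nonneg _
  set U := |u x| with hU
  have hU0 : 0 ≤ U := abs_nonneg _
  have hY := aux_young p K (U / R) g hp hK0.le (by positivity) hg0
  rw [Real.div_rpow hU0 hpos.le, Real.div_rpow hU0 hpos.le] at hY
  have e1 : R ^ (1 - (p - β)) = R ^ β / R ^ (p - 1) := by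
    rw [← Real.rpow_sub hpos]; congr 1; ring
  have e2 : R ^ (β - p) = R ^ β / R ^ p := by
    rw [← Real.rpow_sub hpos]
  have hRβ : 0 < R ^ β := by positivity
  calc 2 * C * (‖fderiv ℝ v x‖ * R ^ (1 - (p - β)))
      ≤ 2 * C * ((p * U ^ (p - 1) * g) * R ^ (1 - (p - β))) := by gcongr
    _ = R ^ β * (2 * (K * (U ^ (p - 1) / R ^ (p - 1) * g))) := by
        rw [e1, hK]; ring
    _ ≤ R ^ β * (U ^ p / R ^ p + k * g ^ p) := by gcongr
    _ = _ := by rw [e2]; ring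
end

section
/- Let n ≥ 1, 1 ≤ p < ∞ and β < 0, and let Ω ⊆ ℝⁿ be an open set with nonempty complement such that there exist t > p − β and C_A ≥ 1 with |(Ω^c)_r ∩ B(x,R)| ≤ C_A (r/R)^t |B(x,R)| for every x ∈ Ω^c and all 0 < r < R < ∞ (i.e. the lower Assouad codimension of Ω^c exceeds p − β). Then there exists C > 0 such that ∫_Ω |u(x)|^p d_Ω(x)^{β−p} dx ≤ C ∫_Ω ‖∇u(x)‖^p d_Ω(x)^β dx for every Lipschitz function u : ℝⁿ → ℝ for which the set {x ∈ Ω : u(x) ≠ 0} is bounded (u is not required to vanish on Ω^c). Moreover, if the neighborhood bound holds with some exponent t > p (i.e. the lower Assouad codimension of Ω^c exceeds p), then there exist β̃ < 0 and C* > 0 such that for every β ∈ (β̃, 0) the above inequality holds for all such u with the constant C = C*/|β|. -/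
open MeasureTheory Metric ENNReal

theorem ray_bound {n : ℕ} (u : EuclideanSpace ℝ (Fin n) → ℝ) (L : NNReal)
    (hu : LipschitzWith L u) (x w : EuclideanSpace ℝ (Fin n)) (S : ℝ) (hS : 0 < S)
    (h0 : u (x + S • w) = 0)
    (hd : ∀ᵐ s ∂(volume.restrict (Set.Ioi (0:ℝ))), DifferentiableAt ℝ u (x + s • w)) :
    ‖u x‖ₑ ≤ ∫⁻ s in Set.Ioi (0:ℝ), ‖w‖ₑ * ‖fderiv ℝ u (x + s • w)‖ₑ := by
  set h : ℝ → ℝ := fun s => u (x + s • w) with hh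
  have hl : LipschitzWith (L * ‖w‖₊) h := by
    refine hu.comp ?_
    refine LipschitzWith.of_dist_le_mul fun a b => ?_
    rw [dist_add_left, dist_eq_norm, ← sub_smul, norm_smul, Real.dist_eq, mul_comm]
    simp
  have hac : AbsolutelyContinuousOnInterval h 0 S :=
    (hl.lipschitzOnWith (s := Set.uIcc 0 S)).absolutelyContinuousOnInterval
  have hF := hac.integral_deriv_eq_sub
  have e1 : u x = - ∫ s in (0:ℝ)..S, deriv h s := by
    rw [hF]; simp [hh, h0]
  rw [e1, enorm_neg, intervalIntegral.integral_of_le hS.le]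
  refine (enorm_integral_le_lintegral_enorm _).trans ?_
  refine (lintegral_mono_set Set.Ioc_subset_Ioi_self).trans ?_
  refine lintegral_mono_ae ?_
  filter_upwards [hd] with s hs
  have : HasDerivAt h (fderiv ℝ u (x + s • w) w) s := by
    have h2 : HasDerivAt (fun s : ℝ => x + s • w) w s := by
      simpa using ((hasDerivAt_id s).smul_const w).const_add x
    exact hs.hasFDerivAt.comp_hasDerivAt s h2
  rw [this.deriv, mul_comm]
  exact ContinuousLinearMap.le_opENorm _ _

theorem ae_ray {n : ℕ} (P : EuclideanSpace ℝ (Fin n) → Prop)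
    (hm : MeasurableSet {y | P y}) (hP : ∀ᵐ y, P y)
    (x : EuclideanSpace ℝ (Fin n)) (d : ℝ) (hd : 0 < d) :
    ∀ᵐ v : EuclideanSpace ℝ (Fin n), ∀ᵐ s ∂(volume.restrict (Set.Ioi (0:ℝ))),
      P (x + s • (d • v)) := by
  rw [Measure.ae_ae_comm]
  · filter_upwards [ae_restrict_mem measurableSet_Ioi] with s hs
    have hs : 0 < s := hs
    have q : Measure.QuasiMeasurePreserving (fun v : EuclideanSpace ℝ (Fin n) => x + s • (d • v))
        volume volume := by
      have q1 := (measurePreserving_add_left (volume : Measure (EuclideanSpace ℝ (Fin n))) x).quasiMeasurePreserving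
      have q2 := Measure.quasiMeasurePreserving_smul (volume : Measure (EuclideanSpace ℝ (Fin n))) hs.ne'
      have q3 := Measure.quasiMeasurePreserving_smul (volume : Measure (EuclideanSpace ℝ (Fin n))) hd.ne'
      exact q1.comp (q2.comp q3)
    exact q.ae hP
  · refine measurableSet_preimage (f := fun z : EuclideanSpace ℝ (Fin n) × ℝ => x + z.2 • (d • z.1)) ?_ hm
    fun_prop

theorem holder_w (μ : Measure ℝ) (p : ℝ) (hp : 1 ≤ p) (f w : ℝ → ℝ≥0∞) (hf : Measurable f)
    (hw : Measurable w) (hw0 : ∀ s, w s ≠ 0) (hwt : ∀ s, w s ≠ ∞) :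
    (∫⁻ s, f s ∂μ) ^ p ≤ (∫⁻ s, (w s)⁻¹ ∂μ) ^ (p - 1) * ∫⁻ s, f s ^ p * w s ^ (p - 1) ∂μ := by
  rcases hp.eq_or_lt with rfl | hp
  · simp
  have hp0 : 0 < p := by linarith
  have hpq := Real.HolderConjugate.conjExponent hp
  set q := p.conjExponent with hq
  have hqv : (p - 1) / p * q = 1 := by
    rw [hq, Real.conjExponent]; have : p - 1 ≠ 0 := by linarith
    field_simp
  have H := ENNReal.lintegral_mul_le_Lp_mul_Lq μ hpq (f := fun s => f s * w s ^ ((p-1)/p))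
    (g := fun s => (w s)⁻¹ ^ ((p-1)/p)) (by fun_prop) (by fun_prop)
  have e0 : ∀ s, f s * w s ^ ((p-1)/p) * (w s)⁻¹ ^ ((p-1)/p) = f s := by
    intro s
    rw [mul_assoc, ← ENNReal.mul_rpow_of_nonneg _ _ (by apply div_nonneg <;> linarith), ENNReal.mul_inv_cancel (hw0 s) (hwt s)]
    simp
  have e1 : ∀ s, (f s * w s ^ ((p-1)/p))^p = f s ^ p * w s ^ (p-1) := by
    intro s
    rw [ENNReal.mul_rpow_of_nonneg _ _ hp0.le, ← ENNReal.rpow_mul]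
    congr 2; field_simp
  have e2 : ∀ s, ((w s)⁻¹ ^ ((p-1)/p))^q = (w s)⁻¹ := by
    intro s
    rw [← ENNReal.rpow_mul, hqv]; simp
  simp only [Pi.mul_apply, e0, e1, e2] at H
  have H2 := ENNReal.rpow_le_rpow H hp0.le
  rw [ENNReal.mul_rpow_of_nonneg _ _ hp0.le, ← ENNReal.rpow_mul, ← ENNReal.rpow_mul] at H2
  have e3 : 1 / p * p = 1 := by field_simp
  have e4 : 1 / q * p = p - 1 := by
    rw [hq, Real.conjExponent]; have : p - 1 ≠ 0 := by linarith
    field_simp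
  rw [e3, e4, ENNReal.rpow_one, mul_comm] at H2
  exact H2

theorem lint_rpow (ε : ℝ) (hε : 0 < ε) :
    ∫⁻ s in Set.Ioi (0:ℝ), ENNReal.ofReal ((1+s) ^ (-1-ε)) = ENNReal.ofReal (1/ε) := by
  have hi : IntegrableOn (fun s : ℝ => (s+1) ^ (-1-ε)) (Set.Ioi 0) :=
    integrableOn_add_rpow_Ioi_of_lt (by linarith) (by norm_num)
  simp only [add_comm (1:ℝ)]
  rw [← ofReal_integral_eq_lintegral_ofReal hi]
  · congr 1
    have := integral_Ioi_rpow_of_lt (a := -1-ε) (by linarith) (c := 1) one_pos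
    have h2 := (measurePreserving_add_right (volume : Measure ℝ) 1).setIntegral_preimage_emb
      (measurableEmbedding_addRight 1) (fun s : ℝ => s ^ (-1-ε)) (Set.Ioi 1)
    simp only [Set.preimage_add_const_Ioi, sub_self] at h2
    rw [h2, this, show -1 - ε + 1 = -ε by ring]
    simp
  · filter_upwards [ae_restrict_mem measurableSet_Ioi] with s hs
    have hs : 0 < s := hs
    simp only [Pi.zero_apply]
    positivity

theorem cov {n : ℕ} (G : EuclideanSpace ℝ (Fin n) → ℝ≥0∞) (hG : Measurable G)
    (x : EuclideanSpace ℝ (Fin n)) (c : ℝ) (hc : 0 < c) :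
    ∫⁻ v in ball (0 : EuclideanSpace ℝ (Fin n)) 1, G (x + c • v) =
      ENNReal.ofReal (c ^ (-(n:ℝ))) * ∫⁻ y in ball x c, G y := by
  have h1 : ∀ v : EuclideanSpace ℝ (Fin n), (ball (0 : EuclideanSpace ℝ (Fin n)) 1).indicator (fun v => G (x + c • v)) v
      = (ball x c).indicator G (x + c • v) := by
    intro v
    have : v ∈ ball (0 : EuclideanSpace ℝ (Fin n)) 1 ↔ x + c • v ∈ ball x c := by
      simp [mem_ball, dist_eq_norm, norm_smul, abs_of_pos hc]
      rw [mul_lt_iff_lt_one_right hc]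
    by_cases h : v ∈ ball (0 : EuclideanSpace ℝ (Fin n)) 1
    · rw [Set.indicator_of_mem h, Set.indicator_of_mem (this.1 h)]
    · rw [Set.indicator_of_notMem h, Set.indicator_of_notMem (fun h' => h (this.2 h'))]
  rw [← lintegral_indicator measurableSet_ball, ← lintegral_indicator measurableSet_ball]
  simp only [h1]
  have hF : Measurable ((ball x c).indicator G) := hG.indicator measurableSet_ball
  have h2 := lintegral_map (μ := (volume : Measure (EuclideanSpace ℝ (Fin n))))
    (f := fun y => (ball x c).indicator G (x + y)) (g := fun v => c • v) (by fun_prop) (by fun_prop)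
  rw [← h2, Measure.map_addHaar_smul _ hc.ne', lintegral_smul_measure, lintegral_add_left_eq_self]
  simp only [finrank_euclideanSpace, Fintype.card_fin, smul_eq_mul]
  congr 2
  rw [Real.rpow_neg hc.le, Real.rpow_natCast, abs_of_pos (by positivity)]

theorem kern_small {n : ℕ} (F : Set (EuclideanSpace ℝ (Fin n))) (β : ℝ) (hβ : β < 0)
    (y : EuclideanSpace ℝ (Fin n)) (hy : 0 < infDist y F) (s : ℝ) (hs : 0 < s) (hs2 : s ≤ 1/2) :
    ∫⁻ x in {x | dist x y < s * infDist x F}, ENNReal.ofReal (infDist x F ^ (β - n)) ≤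
      ENNReal.ofReal (3 ^ n * (3/2) ^ (-β) * s ^ n * infDist y F ^ β)
        * volume (ball (0 : EuclideanSpace ℝ (Fin n)) 1) := by
  have hm : MeasurableSet {x | dist x y < s * infDist x F} := by
    apply measurableSet_lt <;> fun_prop
  have hyx : ∀ x, infDist y F ≤ infDist x F + dist x y := fun x => by
    rw [dist_comm]; exact infDist_le_infDist_add_dist
  have hxy : ∀ x, infDist x F ≤ infDist y F + dist x y := fun x => infDist_le_infDist_add_dist
  have hnn : (0:ℝ) ≤ n := by positivity
  have step1 : ∫⁻ x in {x | dist x y < s * infDist x F}, ENNReal.ofReal (infDist x F ^ (β - n)) ≤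
      ∫⁻ x in {x | dist x y < s * infDist x F}, ENNReal.ofReal ((2/3 * infDist y F) ^ (β - n)) := by
    refine setLIntegral_mono' hm fun x hx => ?_
    apply ENNReal.ofReal_le_ofReal
    have hx : dist x y < s * infDist x F := hx
    have h0 := infDist_nonneg (x := x) (s := F)
    have := hyx x
    apply Real.rpow_le_rpow_of_nonpos (by positivity) _ (by linarith)
    nlinarith
  refine step1.trans ?_
  rw [setLIntegral_const]
  have hsub : {x | dist x y < s * infDist x F} ⊆ ball y (2 * s * infDist y F) := by
    intro x hx
    have hx : dist x y < s * infDist x F := hx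
    have h0 := infDist_nonneg (x := x) (s := F)
    have := hxy x
    rw [mem_ball]
    have h2 : infDist x F ≤ 2 * infDist y F := by nlinarith
    nlinarith
  refine (mul_le_mul_right (measure_mono hsub) _).trans ?_
  rw [Measure.addHaar_ball_of_pos _ _ (by positivity), ← mul_assoc, ← ENNReal.ofReal_mul (by positivity)]
  refine mul_le_mul_left (ENNReal.ofReal_le_ofReal ?_) _
  apply le_of_eq
  simp only [finrank_euclideanSpace, Fintype.card_fin]
  set D := infDist y F
  rw [Real.rpow_sub (by positivity), Real.mul_rpow (by positivity) hy.le, Real.rpow_natCast, Real.rpow_neg (by positivity),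
    ← Real.inv_rpow (by positivity)]
  have : (3/2:ℝ)⁻¹ = 2/3 := by norm_num
  rw [this]
  have h3 : (3:ℝ)^n * (2/3)^n = 2^n := by rw [← mul_pow]; norm_num
  rw [mul_pow, mul_pow, mul_pow, ← h3]
  field_simp

theorem kern_big {n : ℕ} (F : Set (EuclideanSpace ℝ (Fin n))) (hF : IsClosed F) (hFn : F.Nonempty)
    (β : ℝ) (hβ : β < 0) (t C_A : ℝ) (ht : 0 < t) (hCA : 1 ≤ C_A)
    (hthin : ∀ x ∈ F, ∀ r R : ℝ, 0 < r → r < R →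
      volume (Metric.thickening r F ∩ Metric.closedBall x R) ≤
        ENNReal.ofReal (C_A * (r / R) ^ t) * volume (Metric.closedBall x R))
    (y : EuclideanSpace ℝ (Fin n)) (hy : 0 < infDist y F) (s : ℝ) (hs2 : 1/2 ≤ s) :
    ∫⁻ x in {x | dist x y < s * infDist x F}, ENNReal.ofReal (infDist x F ^ (β - n)) ≤
      ENNReal.ofReal (20 ^ n * C_A * (1 + 1 / (|β| * Real.log 2)) * s ^ n * (1 + s) ^ (-t-β) * infDist y F ^ β)
        * volume (ball (0 : EuclideanSpace ℝ (Fin n)) 1) := by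
  have hnn : (0:ℝ) ≤ n := by positivity
  have hyx : ∀ x, infDist y F ≤ infDist x F + dist x y := fun x => by
    rw [dist_comm]; exact infDist_le_infDist_add_dist
  set D := infDist y F with hD
  set s0 := D / (1 + s) with hs0
  have hs0p : 0 < s0 := by positivity
  set ω := volume (ball (0 : EuclideanSpace ℝ (Fin n)) 1) with hω
  set A : ℕ → Set (EuclideanSpace ℝ (Fin n)) := fun j =>
    {x | dist x y < s * infDist x F ∧ 2 ^ j * s0 ≤ infDist x F ∧ infDist x F < 2 ^ (j+1) * s0} with hA
  have hAm : ∀ j, MeasurableSet (A j) := by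
    intro j
    have m1 : MeasurableSet {x | dist x y < s * infDist x F} := by apply measurableSet_lt <;> fun_prop
    have m2 : MeasurableSet {x | 2 ^ j * s0 ≤ infDist x F} := by apply measurableSet_le <;> fun_prop
    have m3 : MeasurableSet {x | infDist x F < 2 ^ (j+1) * s0} := by apply measurableSet_lt <;> fun_prop
    exact m1.inter (m2.inter m3)
  have hcov : {x | dist x y < s * infDist x F} ⊆ ⋃ j, A j := by
    intro x hx
    have hx : dist x y < s * infDist x F := hx
    have h1 : s0 ≤ infDist x F := by
      rw [hs0, div_le_iff₀ (by positivity)]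
      have := hyx x
      linarith
    obtain ⟨j, hj1, hj2⟩ := exists_nat_pow_near (x := infDist x F / s0) (y := 2)
      (by rwa [le_div_iff₀ hs0p, one_mul]) (by norm_num)
    rw [Set.mem_iUnion]
    refine ⟨j, hx, ?_, ?_⟩
    · rwa [le_div_iff₀ hs0p] at hj1
    · rwa [div_lt_iff₀ hs0p] at hj2
  set q := (2:ℝ) ^ β with hq
  have hq0 : 0 < q := by positivity
  have hq1 : q < 1 := Real.rpow_lt_one_of_one_lt_of_neg (by norm_num) hβ
  set c := C_A * 4 ^ n * (2 + s) ^ n * (2 + s) ^ (-t) * s0 ^ β with hc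
  have hc0 : 0 ≤ c := by positivity
  have hlayer : ∀ j, ∫⁻ x in A j, ENNReal.ofReal (infDist x F ^ (β - n)) ≤ ENNReal.ofReal (c * q ^ j) * ω := by
    intro j
    set a := 2 ^ j * s0 with ha
    have hap : 0 < a := by positivity
    have e1 : ∫⁻ x in A j, ENNReal.ofReal (infDist x F ^ (β - n)) ≤ ∫⁻ x in A j, ENNReal.ofReal (a ^ (β - n)) := by
      refine setLIntegral_mono' (hAm j) fun x hx => ENNReal.ofReal_le_ofReal ?_
      exact Real.rpow_le_rpow_of_nonpos hap hx.2.1 (by linarith)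
    refine e1.trans ?_
    rw [setLIntegral_const]
    obtain ⟨z, hz, hzy⟩ := hF.exists_infDist_eq_dist hFn y
    have hsub : A j ⊆ thickening (4 * a) F ∩ closedBall z (4 * (2 + s) * a) := by
      rintro x ⟨h1, h2, h3⟩
      have h3 : infDist x F < 2 * a := by rw [pow_succ] at h3; rw [ha]; linarith
      refine ⟨?_, ?_⟩
      · rw [mem_thickening_iff_infDist_lt hFn]; linarith
      · rw [mem_closedBall]
        have h4 := dist_triangle x y z
        have h5 : dist y z = (1 + s) * s0 := by rw [← hzy, hs0, ← hD]; field_simp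
        have h6 : s0 ≤ a := by
          rw [ha]; exact le_mul_of_one_le_left hs0p.le (one_le_pow₀ (by norm_num))
        nlinarith
    refine (mul_le_mul_right ((measure_mono hsub).trans (hthin z hz _ _ (by positivity) (by nlinarith))) _).trans ?_
    rw [Measure.addHaar_closedBall _ _ (by positivity), ← mul_assoc, ← mul_assoc, ← ENNReal.ofReal_mul (by positivity),
      ← ENNReal.ofReal_mul (by positivity)]
    refine mul_le_mul_left (ENNReal.ofReal_le_ofReal ?_) _
    apply le_of_eq
    simp only [finrank_euclideanSpace, Fintype.card_fin]
    have e2 : 4 * a / (4 * (2 + s) * a) = (2 + s)⁻¹ := by field_simp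
    have e3 : q ^ j * s0 ^ β = a ^ β := by
      rw [ha, Real.mul_rpow (by positivity) hs0p.le, hq, ← Real.rpow_natCast, ← Real.rpow_mul (by norm_num), ← Real.rpow_natCast,
        ← Real.rpow_mul (by norm_num), mul_comm β]
    rw [e2, Real.inv_rpow (by positivity), ← Real.rpow_neg (by positivity), hc]
    rw [show C_A * 4 ^ n * (2 + s) ^ n * (2 + s) ^ (-t) * s0 ^ β * q ^ j = C_A * 4 ^ n * (2 + s) ^ n * (2 + s) ^ (-t) * (q ^ j * s0 ^ β) by ring,
      e3, Real.rpow_sub hap, Real.rpow_natCast, mul_pow (4 * (2 + s)) a n, mul_pow 4 (2 + s) n]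
    clear_value a
    field_simp
  calc _ ≤ ∫⁻ x in ⋃ j, A j, ENNReal.ofReal (infDist x F ^ (β - n)) := lintegral_mono_set hcov
    _ ≤ ∑' j, ∫⁻ x in A j, ENNReal.ofReal (infDist x F ^ (β - n)) := lintegral_iUnion_le _ _
    _ ≤ ∑' j, ENNReal.ofReal (c * q ^ j) * ω := ENNReal.tsum_le_tsum hlayer
    _ = ENNReal.ofReal (c * (1 - q)⁻¹) * ω := by
      rw [ENNReal.tsum_mul_right, ← ENNReal.ofReal_tsum_of_nonneg (fun j => by positivity)
        ((summable_geometric_of_lt_one hq0.le hq1).mul_left c), tsum_mul_left, tsum_geometric_of_lt_one hq0.le hq1]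
    _ ≤ _ := by
      refine mul_le_mul_left (ENNReal.ofReal_le_ofReal ?_) _
      have hl : 0 < Real.log 2 := Real.log_pos (by norm_num)
      have i1 : (1 - q)⁻¹ ≤ 1 + 1 / (|β| * Real.log 2) := by
        rw [abs_of_neg hβ]
        set b := -β * Real.log 2 with hb
        have hbp : 0 < b := by have : 0 < -β := by linarith
                               positivity
        have : q = (Real.exp b)⁻¹ := by
          rw [hq, Real.rpow_def_of_pos (by norm_num), ← Real.exp_neg]; congr 1; rw [hb]; ring
        have h2 : q ≤ (1 + b)⁻¹ := by
          rw [this]; gcongr; linarith [Real.add_one_le_exp b]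
        have h3 : 1 - (1+b)⁻¹ = b / (1 + b) := by field_simp; ring
        have h4 : 1 + 1 / b = (b / (1+b))⁻¹ := by field_simp; ring
        rw [h4]
        apply inv_anti₀ (by positivity)
        rw [← h3]; linarith
      have i2 : (2 + s) ^ n ≤ 5 ^ n * s ^ n := by
        rw [← mul_pow]; gcongr; linarith
      have i3 : (2 + s) ^ (-t) ≤ (1 + s) ^ (-t) :=
        Real.rpow_le_rpow_of_nonpos (by positivity) (by linarith) (by linarith)
      have i4 : s0 ^ β = D ^ β * (1 + s) ^ (-β) := by
        rw [hs0, Real.div_rpow hy.le (by positivity), Real.rpow_neg (by positivity)]; rfl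
      have i5 : (1 + s) ^ (-t-β) = (1 + s) ^ (-t) * (1 + s) ^ (-β) := by
        rw [← Real.rpow_add (by positivity)]; rfl
      have i6 : (20:ℝ) ^ n = 4 ^ n * 5 ^ n := by rw [← mul_pow]; norm_num
      have h1q : 0 ≤ (1 - q)⁻¹ := by rw [inv_nonneg]; linarith
      calc c * (1 - q)⁻¹ ≤ C_A * 4 ^ n * (5 ^ n * s ^ n) * (1 + s) ^ (-t) * s0 ^ β * (1 + 1 / (|β| * Real.log 2)) := by
            rw [hc]; gcongr
        _ = _ := by rw [i4, i5, i6]; ring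

theorem kern {n : ℕ} (F : Set (EuclideanSpace ℝ (Fin n))) (hF : IsClosed F) (hFn : F.Nonempty)
    (β : ℝ) (hβ : β < 0) (t C_A : ℝ) (ht : 0 < t + β) (hCA : 1 ≤ C_A)
    (hthin : ∀ x ∈ F, ∀ r R : ℝ, 0 < r → r < R →
      volume (Metric.thickening r F ∩ Metric.closedBall x R) ≤
        ENNReal.ofReal (C_A * (r / R) ^ t) * volume (Metric.closedBall x R))
    (y : EuclideanSpace ℝ (Fin n)) (hy : 0 < infDist y F) (s : ℝ) (hs : 0 < s) :
    ∫⁻ x in {x | dist x y < s * infDist x F}, ENNReal.ofReal (infDist x F ^ (β - n)) ≤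
      ENNReal.ofReal ((20 ^ n * C_A * (1 + 1 / (|β| * Real.log 2)) + 3 ^ n * (3/2) ^ t) * s ^ n * (1 + s) ^ (-t-β) * infDist y F ^ β)
        * volume (ball (0 : EuclideanSpace ℝ (Fin n)) 1) := by
  have hl : 0 < Real.log 2 := Real.log_pos (by norm_num)
  rcases le_total s (1/2) with h | h
  · refine (kern_small F β hβ y hy s hs h).trans ?_
    gcongr ENNReal.ofReal ?_ * _
    have e : ((3:ℝ)/2) ^ (-β) ≤ (3/2) ^ t * (1+s) ^ (-t-β) := by
      have h1 : ((3:ℝ)/2) ^ (-t-β) ≤ (1+s) ^ (-t-β) := 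
        Real.rpow_le_rpow_of_nonpos (by positivity) (by linarith) (by linarith)
      have h2 : ((3:ℝ)/2) ^ (-β) = (3/2) ^ t * (3/2) ^ (-t-β) := by
        rw [← Real.rpow_add (by norm_num)]; congr 1; ring
      rw [h2]; gcongr
    calc 3 ^ n * (3/2) ^ (-β) * s ^ n * infDist y F ^ β ≤ 3 ^ n * ((3/2) ^ t * (1+s) ^ (-t-β)) * s ^ n * infDist y F ^ β := by gcongr
      _ = (0 + 3 ^ n * (3/2) ^ t) * s ^ n * (1 + s) ^ (-t-β) * infDist y F ^ β := by ring
      _ ≤ _ := by gcongr; positivity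
  · refine (kern_big F hF hFn β hβ t C_A (by linarith) hCA hthin y hy s h).trans ?_
    gcongr ENNReal.ofReal (?_ * _ * _ * _) * _
    have : (0:ℝ) ≤ 3 ^ n * (3/2) ^ t := by positivity
    linarith

theorem null_F {n : ℕ} (F : Set (EuclideanSpace ℝ (Fin n))) (hFn : F.Nonempty)
    (t C_A : ℝ) (ht : 0 < t)
    (hthin : ∀ x ∈ F, ∀ r R : ℝ, 0 < r → r < R →
      volume (Metric.thickening r F ∩ Metric.closedBall x R) ≤
        ENNReal.ofReal (C_A * (r / R) ^ t) * volume (Metric.closedBall x R)) :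
    volume F = 0 := by
  obtain ⟨z, hz⟩ := hFn
  have key : ∀ N : ℕ, volume (F ∩ closedBall z ((N:ℝ) + 1)) = 0 := by
    intro N
    have hR : (0:ℝ) < N + 1 := by positivity
    set R : ℝ := N + 1 with hRd
    have hb : ∀ᶠ r in nhdsWithin (0:ℝ) (Set.Ioi 0), volume (F ∩ closedBall z R) ≤
        ENNReal.ofReal (C_A * (r / R) ^ t) * volume (Metric.closedBall z R) := by
      filter_upwards [Ioo_mem_nhdsGT hR] with r hr
      refine (measure_mono ?_).trans (hthin z hz r R hr.1 hr.2)
      exact Set.inter_subset_inter_left _ (self_subset_thickening hr.1 F)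
    have hlim : Filter.Tendsto (fun r : ℝ => ENNReal.ofReal (C_A * (r / R) ^ t) * volume (Metric.closedBall z R))
        (nhdsWithin (0:ℝ) (Set.Ioi 0)) (nhds (ENNReal.ofReal (C_A * (0 / R) ^ t) * volume (Metric.closedBall z R))) := by
      apply ENNReal.Tendsto.mul_const
      · apply (ENNReal.tendsto_ofReal _).mono_left nhdsWithin_le_nhds
        have : Continuous (fun r : ℝ => C_A * (r / R) ^ t) := by
          refine continuous_const.mul (Continuous.rpow_const (by fun_prop) fun _ => Or.inr ht.le)
        exact this.tendsto 0
      · right; exact measure_closedBall_lt_top.ne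
    have := ge_of_tendsto hlim hb
    simpa [Real.zero_rpow ht.ne'] using this
  refine measure_mono_null ?_ (measure_iUnion_null key)
  intro x hx
  obtain ⟨N, hN⟩ := exists_nat_ge (dist x z)
  exact Set.mem_iUnion.2 ⟨N, hx, by rw [mem_closedBall]; linarith⟩

theorem supp_bdd {n : ℕ} (Ω : Set (EuclideanSpace ℝ (Fin n))) (h0 : volume Ωᶜ = 0)
    (u : EuclideanSpace ℝ (Fin n) → ℝ) (hu : Continuous u)
    (hb : Bornology.IsBounded {x ∈ Ω | u x ≠ 0}) :
    ∃ R : ℝ, 0 ≤ R ∧ ∀ y, R < ‖y‖ → u y = 0 := by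
  obtain ⟨R, hR⟩ := hb.subset_closedBall 0
  refine ⟨max R 0, le_max_right _ _, ?_⟩
  have ho : IsOpen ({y | u y ≠ 0} ∩ (closedBall (0 : EuclideanSpace ℝ (Fin n)) R)ᶜ) :=
    (isOpen_ne_fun hu continuous_const).inter isClosed_closedBall.isOpen_compl
  have hn : volume ({y | u y ≠ 0} ∩ (closedBall (0 : EuclideanSpace ℝ (Fin n)) R)ᶜ) = 0 := by
    refine measure_mono_null ?_ h0
    rintro y ⟨h1, h2⟩ hy
    exact h2 (hR ⟨hy, h1⟩)
  have he := ho.eq_empty_of_measure_zero hn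
  intro y hy
  by_contra hne
  have : y ∈ ({y | u y ≠ 0} ∩ (closedBall (0 : EuclideanSpace ℝ (Fin n)) R)ᶜ) := by
    refine ⟨hne, ?_⟩
    simp only [Set.mem_compl_iff, mem_closedBall, dist_zero_right, not_le]
    exact (le_max_left _ _).trans_lt hy
  rw [he] at this
  exact this

theorem ptwise {n : ℕ} (hn : 1 ≤ n) (p : ℝ) (hp : 1 ≤ p) (u : EuclideanSpace ℝ (Fin n) → ℝ) (L : NNReal)
    (hu : LipschitzWith L u) (R : ℝ) (hR : 0 ≤ R) (hz : ∀ y, R < ‖y‖ → u y = 0)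
    (w : ℝ → ℝ≥0∞) (hw : Measurable w) (hw0 : ∀ s, w s ≠ 0) (hwt : ∀ s, w s ≠ ∞)
    (x : EuclideanSpace ℝ (Fin n)) (d : ℝ) (hd : 0 < d) :
    volume (ball (0 : EuclideanSpace ℝ (Fin n)) 1) * ‖u x‖ₑ ^ p ≤
      ENNReal.ofReal (d ^ p) * (∫⁻ s in Set.Ioi (0:ℝ), (w s)⁻¹) ^ (p-1) *
        ∫⁻ s in Set.Ioi (0:ℝ), w s ^ (p-1) *
          (ENNReal.ofReal ((s * d) ^ (-(n:ℝ))) * ∫⁻ y in ball x (s*d), ‖fderiv ℝ u y‖ₑ ^ p) := by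
  have hp0 : 0 < p := by linarith
  have : Nonempty (Fin n) := ⟨⟨0, hn⟩⟩
  have hGm : Measurable (fun y => ‖fderiv ℝ u y‖ₑ) := (measurable_fderiv ℝ u).enorm
  have hae := ae_ray (fun y => DifferentiableAt ℝ u y) (measurableSet_of_differentiableAt ℝ u)
    hu.ae_differentiableAt x d hd
  have hne : ∀ᵐ v : EuclideanSpace ℝ (Fin n), v ≠ 0 := by
    rw [ae_iff]; simp
  have h1 : ∀ᵐ v ∂(volume.restrict (ball (0 : EuclideanSpace ℝ (Fin n)) 1)),
      ‖u x‖ₑ ^ p ≤ ENNReal.ofReal (d ^ p) * (∫⁻ s in Set.Ioi (0:ℝ), (w s)⁻¹) ^ (p-1) *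
        ∫⁻ s in Set.Ioi (0:ℝ), w s ^ (p-1) * ‖fderiv ℝ u (x + (s * d) • v)‖ₑ ^ p := by
    filter_upwards [ae_restrict_of_ae hae, ae_restrict_of_ae hne, ae_restrict_mem measurableSet_ball] with v hv1 hv2 hv3
    have hvp : 0 < ‖v‖ := norm_pos_iff.2 hv2
    have hv3 : ‖v‖ ≤ 1 := by simpa using (mem_ball_zero_iff.1 hv3).le
    set S := (R + ‖x‖ + 1) / (d * ‖v‖) with hS
    have hSp : 0 < S := by positivity
    have hr := ray_bound u L hu x (d • v) S hSp (by
      apply hz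
      have e : ‖S • d • v‖ = R + ‖x‖ + 1 := by
        rw [norm_smul, norm_smul, Real.norm_of_nonneg hSp.le, Real.norm_of_nonneg hd.le, hS]; field_simp
      have e2 : ‖S • d • v‖ ≤ ‖x + S • d • v‖ + ‖x‖ := by
        have := norm_sub_le (x + S • d • v) x
        simpa using this
      linarith) hv1
    have hr2 : ‖u x‖ₑ ≤ ENNReal.ofReal d * ∫⁻ s in Set.Ioi (0:ℝ), ‖fderiv ℝ u (x + (s * d) • v)‖ₑ := by
      refine hr.trans ?_
      rw [lintegral_const_mul _ (by fun_prop)]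
      simp only [mul_smul]
      refine mul_le_mul_left ?_ _
      rw [← ofReal_norm]
      apply ENNReal.ofReal_le_ofReal
      rw [norm_smul, Real.norm_of_nonneg hd.le]
      exact mul_le_of_le_one_right hd.le hv3
    have hh := holder_w (volume.restrict (Set.Ioi (0:ℝ))) p hp (fun s => ‖fderiv ℝ u (x + (s * d) • v)‖ₑ) w
      (by fun_prop) hw hw0 hwt
    calc ‖u x‖ₑ ^ p ≤ _ := ENNReal.rpow_le_rpow hr2 hp0.le
      _ = ENNReal.ofReal (d ^ p) * (∫⁻ s in Set.Ioi (0:ℝ), ‖fderiv ℝ u (x + (s * d) • v)‖ₑ) ^ p := by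
        rw [ENNReal.mul_rpow_of_nonneg _ _ hp0.le, ENNReal.ofReal_rpow_of_pos hd]
      _ ≤ _ := by
        rw [mul_assoc]
        refine mul_le_mul_right ?_ _
        simpa only [mul_comm] using hh
  have h2 := lintegral_mono_ae h1
  rw [lintegral_const, Measure.restrict_apply_univ, mul_comm, lintegral_const_mul] at h2
  · refine h2.trans (mul_le_mul_right (le_of_eq ?_) _)
    rw [lintegral_lintegral_swap]
    · refine setLIntegral_congr_fun measurableSet_Ioi fun s hs => ?_
      have hs : 0 < s := hs
      rw [lintegral_const_mul _ (by fun_prop), cov (fun y => ‖fderiv ℝ u y‖ₑ ^ p) (by fun_prop) x (s * d) (by positivity)]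
    · apply Measurable.aemeasurable
      simp only [Function.uncurry_def]
      fun_prop
  · apply Measurable.lintegral_prod_right'
      (f := fun z : EuclideanSpace ℝ (Fin n) × ℝ => w z.2 ^ (p-1) * ‖fderiv ℝ u (x + (z.2 * d) • z.1)‖ₑ ^ p)
    fun_prop

theorem fubini_s {n : ℕ} (F : Set (EuclideanSpace ℝ (Fin n))) (hF : IsClosed F) (hFn : F.Nonempty)
    (hF0 : volume F = 0)
    (β : ℝ) (hβ : β < 0) (t C_A : ℝ) (ht : 0 < t + β) (hCA : 1 ≤ C_A)
    (hthin : ∀ x ∈ F, ∀ r R : ℝ, 0 < r → r < R →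
      volume (Metric.thickening r F ∩ Metric.closedBall x R) ≤
        ENNReal.ofReal (C_A * (r / R) ^ t) * volume (Metric.closedBall x R))
    (g : EuclideanSpace ℝ (Fin n) → ℝ≥0∞) (hg : Measurable g) (s : ℝ) (hs : 0 < s) :
    ∫⁻ x, ENNReal.ofReal (infDist x F ^ (β - n)) * ∫⁻ y in ball x (s * infDist x F), g y ≤
      ENNReal.ofReal ((20 ^ n * C_A * (1 + 1 / (|β| * Real.log 2)) + 3 ^ n * (3/2) ^ t) * s ^ n * (1 + s) ^ (-t-β))
        * volume (ball (0 : EuclideanSpace ℝ (Fin n)) 1) *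
        ∫⁻ y, g y * ENNReal.ofReal (infDist y F ^ β) := by
  have hl : 0 < Real.log 2 := Real.log_pos (by norm_num)
  have hset : MeasurableSet {z : EuclideanSpace ℝ (Fin n) × EuclideanSpace ℝ (Fin n) |
      dist z.1 z.2 < s * infDist z.1 F} := by
    apply measurableSet_lt <;> fun_prop
  have e1 : ∀ x, ENNReal.ofReal (infDist x F ^ (β - n)) * ∫⁻ y in ball x (s * infDist x F), g y =
      ∫⁻ y, {z : EuclideanSpace ℝ (Fin n) × EuclideanSpace ℝ (Fin n) |
      dist z.1 z.2 < s * infDist z.1 F}.indicator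
        (fun z => ENNReal.ofReal (infDist z.1 F ^ (β - n)) * g z.2) (x, y) := by
    intro x
    rw [← lintegral_const_mul _ hg, ← lintegral_indicator measurableSet_ball]
    refine lintegral_congr fun y => ?_
    simp only [Set.indicator, mem_ball, Set.mem_ofPred_eq, dist_comm y x]
  simp only [e1]
  rw [lintegral_lintegral_swap]
  · have hsw : volume.restrict Fᶜ = (volume : Measure (EuclideanSpace ℝ (Fin n))) :=
      Measure.restrict_eq_self_of_ae_mem (compl_mem_ae_iff.2 hF0)
    rw [← lintegral_const_mul _ (by fun_prop)]
    refine lintegral_mono_ae ?_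
    have : ∀ᵐ y : EuclideanSpace ℝ (Fin n), y ∈ Fᶜ := compl_mem_ae_iff.2 hF0
    filter_upwards [this] with y hy
    have hy0 : 0 < infDist y F := (hF.notMem_iff_infDist_pos hFn).1 hy
    have hm : MeasurableSet {x | dist x y < s * infDist x F} := by
      apply measurableSet_lt <;> fun_prop
    have e2 : ∫⁻ x, {z : EuclideanSpace ℝ (Fin n) × EuclideanSpace ℝ (Fin n) |
      dist z.1 z.2 < s * infDist z.1 F}.indicator
        (fun z => ENNReal.ofReal (infDist z.1 F ^ (β - n)) * g z.2) (x, y) =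
        (∫⁻ x in {x | dist x y < s * infDist x F}, ENNReal.ofReal (infDist x F ^ (β - n))) * g y := by
      rw [← lintegral_mul_const _ (by fun_prop), ← lintegral_indicator hm]
      rfl
    rw [e2]
    refine (mul_le_mul_left (kern F hF hFn β hβ t C_A ht hCA hthin y hy0 s hs) _).trans (le_of_eq ?_)
    rw [ENNReal.ofReal_mul (by positivity)]
    ring
  · apply Measurable.aemeasurable
    simp only [Function.uncurry_def]
    apply Measurable.indicator _ hset
    fun_prop

set_option maxHeartbeats 400000 in
theorem core {n : ℕ} (hn : 1 ≤ n) (p β : ℝ) (hp : 1 ≤ p) (hβ : β < 0)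
    (Ω : Set (EuclideanSpace ℝ (Fin n))) (hΩopen : IsOpen Ω) (hΩc : Ωᶜ.Nonempty)
    (t C_A : ℝ) (ht : p - β < t) (hCA : 1 ≤ C_A)
    (hthin : ∀ x ∈ Ωᶜ, ∀ r R : ℝ, 0 < r → r < R →
      volume (Metric.thickening r Ωᶜ ∩ Metric.closedBall x R) ≤
        ENNReal.ofReal (C_A * (r / R) ^ t) * volume (Metric.closedBall x R))
    (u : EuclideanSpace ℝ (Fin n) → ℝ)
    (hu : ∃ L : NNReal, LipschitzWith L u) (hb : Bornology.IsBounded {x ∈ Ω | u x ≠ 0}) :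
      ∫⁻ x in Ω, ENNReal.ofReal (|u x| ^ p * Metric.infDist x Ωᶜ ^ (β - p)) ≤
        ENNReal.ofReal ((1 / ((t + β - p) / p)) ^ p * (20 ^ n * C_A * (1 + 1 / (|β| * Real.log 2)) + 3 ^ n * (3/2) ^ t)) *
          ∫⁻ x in Ω, ENNReal.ofReal (‖fderiv ℝ u x‖ ^ p * Metric.infDist x Ωᶜ ^ β) := by
  have hp0 : 0 < p := by linarith
  have hl : 0 < Real.log 2 := Real.log_pos (by norm_num)
  obtain ⟨L, hL⟩ := hu
  have hF : IsClosed Ωᶜ := hΩopen.isClosed_compl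
  have hF0 : volume Ωᶜ = 0 := null_F Ωᶜ hΩc t C_A (by linarith) hthin
  have hsw : volume.restrict Ω = (volume : Measure (EuclideanSpace ℝ (Fin n))) :=
    Measure.restrict_eq_self_of_ae_mem (mem_ae_iff.2 hF0)
  obtain ⟨R, hR, hz⟩ := supp_bdd Ω hF0 u hL.continuous hb
  rw [hsw]
  set ε := (t + β - p) / p with hε
  have hεp : 0 < ε := div_pos (by linarith) hp0
  set F := Ωᶜ with hFd
  set M : ℝ := 20 ^ n * C_A * (1 + 1 / (|β| * Real.log 2)) + 3 ^ n * (3/2) ^ t with hM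
  have hMp : 0 ≤ M := by positivity
  set ω := volume (ball (0 : EuclideanSpace ℝ (Fin n)) 1) with hω
  have hω0 : ω ≠ 0 := (measure_ball_pos _ _ one_pos).ne'
  have hωt : ω ≠ ∞ := measure_ball_lt_top.ne
  set w : ℝ → ℝ≥0∞ := fun s => ENNReal.ofReal ((1 + |s|) ^ (1 + ε)) with hw
  have hwm : Measurable w := by fun_prop
  have hw0 : ∀ s, w s ≠ 0 := fun s => by
    have : 0 < (1 + |s|) ^ (1 + ε) := by positivity
    simpa [hw] using this
  have hwt : ∀ s, w s ≠ ∞ := fun s => ENNReal.ofReal_ne_top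
  have hZ : ∫⁻ s in Set.Ioi (0:ℝ), (w s)⁻¹ = ENNReal.ofReal (1/ε) := by
    rw [← lint_rpow ε hεp]
    refine setLIntegral_congr_fun measurableSet_Ioi fun s hs => ?_
    have hs : 0 < s := hs
    simp only [hw]
    rw [← ENNReal.ofReal_inv_of_pos (by positivity), abs_of_pos hs, ← Real.rpow_neg (by positivity)]
    congr 2; ring
  set g : EuclideanSpace ℝ (Fin n) → ℝ≥0∞ := fun y => ‖fderiv ℝ u y‖ₑ ^ p with hg
  have hgm : Measurable g := ((measurable_fderiv ℝ u).enorm).pow_const p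
  set I := ∫⁻ y, g y * ENNReal.ofReal (infDist y F ^ β) with hI
  have eI : ∫⁻ x, ENNReal.ofReal (‖fderiv ℝ u x‖ ^ p * Metric.infDist x F ^ β) = I := by
    refine lintegral_congr fun x => ?_
    rw [ENNReal.ofReal_mul (by positivity), hg, ← ENNReal.ofReal_rpow_of_nonneg (norm_nonneg _) hp0.le, ofReal_norm]
  rw [eI]
  have hrm : Measurable (fun z : EuclideanSpace ℝ (Fin n) × ℝ =>
      ∫⁻ y in ball z.1 (z.2 * infDist z.1 F), g y) := by
    have hset : MeasurableSet {z : (EuclideanSpace ℝ (Fin n) × ℝ) × EuclideanSpace ℝ (Fin n) |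
        dist z.2 z.1.1 < z.1.2 * infDist z.1.1 F} := by
      apply measurableSet_lt <;> fun_prop
    have hm : Measurable ({z : (EuclideanSpace ℝ (Fin n) × ℝ) × EuclideanSpace ℝ (Fin n) |
        dist z.2 z.1.1 < z.1.2 * infDist z.1.1 F}.indicator (fun z => g z.2)) :=
      Measurable.indicator (by fun_prop) hset
    have := hm.lintegral_prod_right' (ν := volume)
    convert this using 2 with z
    rw [← lintegral_indicator measurableSet_ball]
    rfl
  -- pointwise estimate
  have hpt : ∀ᵐ x : EuclideanSpace ℝ (Fin n), ω * ENNReal.ofReal (|u x| ^ p * infDist x F ^ (β - p)) ≤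
      ENNReal.ofReal (1/ε) ^ (p-1) * ∫⁻ s in Set.Ioi (0:ℝ), (w s ^ (p-1) * ENNReal.ofReal (s ^ (-(n:ℝ)))) *
        (ENNReal.ofReal (infDist x F ^ (β - n)) * ∫⁻ y in ball x (s * infDist x F), g y) := by
    have : ∀ᵐ y : EuclideanSpace ℝ (Fin n), y ∈ Ω := mem_ae_iff.2 hF0
    filter_upwards [this] with x hx
    have hd : 0 < infDist x F := (hF.notMem_iff_infDist_pos hΩc).1 (by simpa [hFd] using hx)
    have h := ptwise hn p hp u L hL R hR hz w hwm hw0 hwt x (infDist x F) hd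
    rw [hZ] at h
    set D := infDist x F with hD
    have e1 : ENNReal.ofReal (|u x| ^ p * D ^ (β - p)) = ‖u x‖ₑ ^ p * ENNReal.ofReal (D ^ (β - p)) := by
      rw [ENNReal.ofReal_mul (by positivity), ← ENNReal.ofReal_rpow_of_nonneg (abs_nonneg _) hp0.le,
        Real.enorm_eq_ofReal_abs]
    rw [e1, ← mul_assoc]
    refine (mul_le_mul_left h _).trans (le_of_eq ?_)
    have hfm : Measurable (fun s : ℝ => ∫⁻ y in ball x (s * D), g y) :=
      Measurable.comp (f := fun s : ℝ => (x, s)) hrm (by fun_prop)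
    rw [mul_comm (ENNReal.ofReal (D ^ p)), mul_assoc, mul_assoc]
    congr 1
    rw [← lintegral_mul_const _ (by fun_prop), ← lintegral_const_mul _ (by fun_prop)]
    refine setLIntegral_congr_fun measurableSet_Ioi fun s hs => ?_
    have hs : 0 < s := hs
    have e2 : D ^ (β - n) = D ^ p * (D ^ (-(n:ℝ)) * D ^ (β - p)) := by
      rw [← Real.rpow_add hd, ← Real.rpow_add hd]; congr 1; ring
    rw [e2, Real.mul_rpow hs.le hd.le, ENNReal.ofReal_mul (by positivity), ENNReal.ofReal_mul (by positivity),
      ENNReal.ofReal_mul (by positivity)]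
    ring
  have hint := lintegral_mono_ae hpt
  rw [lintegral_const_mul' _ _ hωt, lintegral_const_mul, lintegral_lintegral_swap] at hint
  rotate_left
  · apply Measurable.aemeasurable
    simp only [Function.uncurry_def]
    fun_prop
  · apply Measurable.lintegral_prod_right'
      (f := fun z : EuclideanSpace ℝ (Fin n) × ℝ => (w z.2 ^ (p-1) * ENNReal.ofReal (z.2 ^ (-(n:ℝ)))) *
        (ENNReal.ofReal (infDist z.1 F ^ (β - n)) * ∫⁻ y in ball z.1 (z.2 * infDist z.1 F), g y))
    fun_prop
  have hs_bound : ∀ s ∈ Set.Ioi (0:ℝ), ∫⁻ x, (w s ^ (p-1) * ENNReal.ofReal (s ^ (-(n:ℝ)))) *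
        (ENNReal.ofReal (infDist x F ^ (β - n)) * ∫⁻ y in ball x (s * infDist x F), g y) ≤
        ENNReal.ofReal ((1 + s) ^ (-1-ε)) * (ENNReal.ofReal M * ω * I) := by
    intro s hs
    have hs : 0 < s := hs
    have hfm : Measurable (fun x => ∫⁻ y in ball x (s * infDist x F), g y) :=
      Measurable.comp (f := fun x : EuclideanSpace ℝ (Fin n) => (x, s)) hrm (by fun_prop)
    rw [lintegral_const_mul _ (by fun_prop)]
    refine (mul_le_mul_right (fubini_s F hF hΩc hF0 β hβ t C_A (by linarith) hCA hthin g hgm s hs) _).trans (le_of_eq ?_)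
    rw [← mul_assoc, ← mul_assoc, ← mul_assoc, ← mul_assoc]
    congr 2
    simp only [hw]
    rw [ENNReal.ofReal_rpow_of_pos (by positivity), ← ENNReal.ofReal_mul (by positivity), ← ENNReal.ofReal_mul (by positivity),
      ← ENNReal.ofReal_mul (by positivity), abs_of_pos hs]
    congr 1
    rw [← Real.rpow_mul (by positivity), Real.rpow_neg hs.le, Real.rpow_natCast]
    have e3 : (1 + s) ^ (-1 - ε) = (1 + s) ^ ((1 + ε) * (p - 1)) * (1 + s) ^ (-t - β) := by
      rw [← Real.rpow_add (by positivity)]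
      congr 1
      have : ε * p = t + β - p := by rw [hε]; field_simp
      linarith
    rw [e3, ← hM]
    clear_value M
    field_simp
  have hfin := hint.trans (mul_le_mul_right (setLIntegral_mono' measurableSet_Ioi hs_bound) _)
  rw [lintegral_mul_const _ (by fun_prop), lint_rpow ε hεp] at hfin
  have e4 : ENNReal.ofReal (1/ε) ^ (p-1) * (ENNReal.ofReal (1/ε) * (ENNReal.ofReal M * ω * I)) =
      ω * (ENNReal.ofReal ((1/ε) ^ p * M) * I) := by
    have hp1 : (1/ε) ^ p = (1/ε) ^ (p-1) * (1/ε) := by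
      rw [← Real.rpow_add_one (by positivity)]; congr 1; ring
    rw [ENNReal.ofReal_rpow_of_pos (by positivity), hp1, ENNReal.ofReal_mul (by positivity),
      ENNReal.ofReal_mul (by positivity)]
    ring
  rw [e4] at hfin
  exact (ENNReal.mul_le_mul_iff_right hω0 hωt).1 hfin



/-- Euclidean case of Proposition 3.1: for `β < 0` and
`lcodima(Ωᶜ) > p - β`, the `(p,β)`-Hardy inequality holds for all Lipschitz functions
with bounded support in `Ω` (not required to vanish on `Ωᶜ`).  Moreover, if the
neighborhood bound holds with an exponent `t > p`, then there are `β̃ < 0` and `C* > 0`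
such that for all `β' ∈ (β̃, 0)` the inequality holds with constant `C*/|β'|`. -/
theorem hardy_neg_beta_of_lower_assouad_codim_gt
    (n : ℕ) (hn : 1 ≤ n) (p β : ℝ) (hp : 1 ≤ p) (hβ : β < 0)
    (Ω : Set (EuclideanSpace ℝ (Fin n))) (hΩopen : IsOpen Ω) (hΩc : Ωᶜ.Nonempty)
    (t C_A : ℝ) (ht : p - β < t) (hCA : 1 ≤ C_A)
    (hthin : ∀ x ∈ Ωᶜ, ∀ r R : ℝ, 0 < r → r < R →
      volume (Metric.thickening r Ωᶜ ∩ Metric.closedBall x R) ≤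
        ENNReal.ofReal (C_A * (r / R) ^ t) * volume (Metric.closedBall x R)) :
    (∃ C : ℝ, 0 < C ∧ ∀ u : EuclideanSpace ℝ (Fin n) → ℝ,
      (∃ L : NNReal, LipschitzWith L u) → Bornology.IsBounded {x ∈ Ω | u x ≠ 0} →
      ∫⁻ x in Ω, ENNReal.ofReal (|u x| ^ p * Metric.infDist x Ωᶜ ^ (β - p)) ≤
        ENNReal.ofReal C *
          ∫⁻ x in Ω, ENNReal.ofReal (‖fderiv ℝ u x‖ ^ p * Metric.infDist x Ωᶜ ^ β)) ∧
    (p < t → ∃ βt : ℝ, βt < 0 ∧ ∃ Cstar : ℝ, 0 < Cstar ∧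
      ∀ β' : ℝ, βt < β' → β' < 0 →
        ∀ u : EuclideanSpace ℝ (Fin n) → ℝ,
          (∃ L : NNReal, LipschitzWith L u) → Bornology.IsBounded {x ∈ Ω | u x ≠ 0} →
          ∫⁻ x in Ω, ENNReal.ofReal (|u x| ^ p * Metric.infDist x Ωᶜ ^ (β' - p)) ≤
            ENNReal.ofReal (Cstar / |β'|) *
              ∫⁻ x in Ω, ENNReal.ofReal (‖fderiv ℝ u x‖ ^ p * Metric.infDist x Ωᶜ ^ β')) := by
  have hl : 0 < Real.log 2 := Real.log_pos (by norm_num)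
  refine ⟨⟨_, ?_, fun u hu hb => core hn p β hp hβ Ω hΩopen hΩc t C_A ht hCA hthin u hu hb⟩, ?_⟩
  · have : 0 < (t + β - p) / p := div_pos (by linarith) (by linarith)
    positivity
  · intro hpt
    refine ⟨-(t - p) / 2, by linarith,
      (1 / ((t - p) / 2 / p)) ^ p * (20 ^ n * C_A * ((t - p) / 2 + 1 / Real.log 2) + 3 ^ n * (3/2) ^ t * ((t - p) / 2)), ?_, ?_⟩
    · have h1 : 0 < t - p := by linarith
      have h2 : 0 < p := by linarith
      positivity
    · intro β' h1 h2 u hu hb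
      refine (core hn p β' hp h2 Ω hΩopen hΩc t C_A (by linarith) hCA hthin u hu hb).trans ?_
      refine mul_le_mul_left (ENNReal.ofReal_le_ofReal ?_) _
      have hp0 : 0 < p := by linarith
      have hb0 : 0 < |β'| := abs_pos.2 h2.ne
      have hb1 : |β'| ≤ (t - p) / 2 := by rw [abs_of_neg h2]; linarith
      have htp : 0 < t - p := by linarith
      have h5 : (t - p) / 2 / p ≤ (t + β' - p) / p := by gcongr; linarith
      have h6 : 0 < (t - p) / 2 / p := by positivity
      rw [mul_div_assoc]
      have h7 : (1 / ((t + β' - p) / p)) ^ p ≤ (1 / ((t - p) / 2 / p)) ^ p :=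
        Real.rpow_le_rpow (by have := h6.trans_le h5; positivity) (one_div_le_one_div_of_le h6 h5) hp0.le
      refine mul_le_mul h7 ?_ (by positivity) (by positivity)
      rw [le_div_iff₀ hb0]
      have h8 : (1 + 1 / (|β'| * Real.log 2)) * |β'| ≤ (t - p) / 2 + 1 / Real.log 2 := by
        have : (1 + 1 / (|β'| * Real.log 2)) * |β'| = |β'| + 1 / Real.log 2 := by field_simp
        linarith
      calc _ = 20 ^ n * C_A * ((1 + 1 / (|β'| * Real.log 2)) * |β'|) + 3 ^ n * (3/2) ^ t * |β'| := by ring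
        _ ≤ _ := by gcongr
end

section
/- Let n ≥ 1, 1 ≤ p < ∞ and β < p − 1, and let Ω ⊆ ℝⁿ be an open set with nonempty complement such that there exist t > p − β and C_A ≥ 1 with |(Ω^c)_r ∩ B(x,R)| ≤ C_A (r/R)^t |B(x,R)| for every x ∈ Ω^c and all 0 < r < R < ∞ (i.e. the lower Assouad codimension of Ω^c exceeds p − β). Then there exists C > 0 such that ∫_Ω |u(x)|^p d_Ω(x)^{β−p} dx ≤ C ∫_Ω ‖∇u(x)‖^p d_Ω(x)^β dx for every Lipschitz function u : ℝⁿ → ℝ for which the set {x ∈ Ω : u(x) ≠ 0} is bounded; in particular, u is not required to vanish on Ω^c. -/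
open MeasureTheory Metric ENNReal

abbrev EE (n : ℕ) := EuclideanSpace ℝ (Fin n)

lemma line_bound {n : ℕ} {v : EE n → ℝ} {L : NNReal} (hv : LipschitzWith L v)
    (x w : EE n) (hw : ‖w‖ ≤ 1) (T : ℝ) (hT : 0 ≤ T) (h0 : v (x + T • w) = 0)
    (hd : ∀ᵐ r ∂(volume.restrict (Set.Ioi (0:ℝ))), DifferentiableAt ℝ v (x + r • w)) :
    ENNReal.ofReal |v x| ≤
      ∫⁻ r in Set.Ioi (0:ℝ), ENNReal.ofReal ‖fderiv ℝ v (x + r • w)‖ := by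
  set f : ℝ → ℝ := fun r => v (x + r • w) with hf
  have hfl : LipschitzWith (L * 1) f := by
    refine hv.comp ?_
    refine LipschitzWith.of_dist_le_mul fun a b => ?_
    rw [dist_add_left, dist_eq_norm, ← sub_smul, norm_smul, Real.dist_eq, Real.norm_eq_abs]
    simpa using mul_le_of_le_one_right (abs_nonneg _) hw
  have hac : AbsolutelyContinuousOnInterval f 0 T :=
    (hfl.lipschitzOnWith).absolutelyContinuousOnInterval
  have h1 := hac.integral_deriv_eq_sub
  have h2 : f T = 0 := h0
  have h3 : f 0 = v x := by simp [hf]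
  rw [h2, h3, intervalIntegral.integral_of_le hT] at h1
  have h4 : ENNReal.ofReal |v x| = ‖∫ r in Set.Ioc 0 T, deriv f r‖ₑ := by
    rw [h1, ← ofReal_norm]; simp
  rw [h4]
  refine (enorm_integral_le_lintegral_enorm _).trans ?_
  refine (lintegral_mono_set Set.Ioc_subset_Ioi_self).trans ?_
  refine lintegral_mono_ae ?_
  filter_upwards [hd] with r hr
  rw [← ofReal_norm]
  apply ENNReal.ofReal_le_ofReal
  have h5 : HasDerivAt f (fderiv ℝ v (x + r • w) w) r := by
    have : HasDerivAt (fun r : ℝ => x + r • w) w r := by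
      simpa using ((hasDerivAt_id r).smul_const w).const_add x
    exact hr.hasFDerivAt.comp_hasDerivAt r this
  rw [h5.deriv]
  exact ((fderiv ℝ v (x + r • w)).le_opNorm w).trans
    (mul_le_of_le_one_right (norm_nonneg _) hw)

lemma scale_ball {n : ℕ} {g : EE n → ℝ≥0∞} (hg : Measurable g) (x : EE n) {r : ℝ} (hr : 0 < r) :
    ∫⁻ w in ball (0 : EE n) 1, g (x + r • w) =
      ENNReal.ofReal ((r ^ n)⁻¹) * ∫⁻ y in ball x r, g y := by
  set h : EE n → ℝ≥0∞ := (ball x r).indicator g with hh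
  have hm : Measurable h := hg.indicator measurableSet_ball
  have e1 : ∀ w, (ball (0 : EE n) 1).indicator (fun w => g (x + r • w)) w = h (x + r • w) := by
    intro w
    have : (x + r • w ∈ ball x r) ↔ w ∈ ball (0 : EE n) 1 := by
      simp only [mem_ball, dist_self_add_left, norm_smul, dist_zero_right, Real.norm_eq_abs,
        abs_of_pos hr]
      exact mul_lt_iff_lt_one_right hr
    by_cases hw : w ∈ ball (0 : EE n) 1
    · rw [Set.indicator_of_mem hw, hh, Set.indicator_of_mem (this.2 hw)]
    · rw [Set.indicator_of_notMem hw, hh, Set.indicator_of_notMem (fun h => hw (this.1 h))]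
  rw [← lintegral_indicator measurableSet_ball, ← lintegral_indicator measurableSet_ball]
  simp_rw [e1]
  have hm2 : Measurable (fun y => h (x + y)) := by fun_prop
  calc ∫⁻ w, h (x + r • w) = ∫⁻ y, h (x + y) ∂(Measure.map (fun w : EE n => r • w) volume) := by
        rw [lintegral_map hm2 (by fun_prop)]
    _ = _ := by
        rw [Measure.map_addHaar_smul _ hr.ne', lintegral_smul_measure,
          lintegral_add_left_eq_self, finrank_euclideanSpace_fin, abs_of_pos (by positivity)]
        rfl

lemma swap_scale {n : ℕ} {g : EE n → ℝ≥0∞} (hg : Measurable g) (x : EE n) :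
    ∫⁻ w in ball (0 : EE n) 1, ∫⁻ r in Set.Ioi (0:ℝ), g (x + r • w) =
      ∫⁻ r in Set.Ioi (0:ℝ), ENNReal.ofReal ((r ^ n)⁻¹) * ∫⁻ y in ball x r, g y := by
  rw [lintegral_lintegral_swap]
  · refine setLIntegral_congr_fun measurableSet_Ioi fun r hr => ?_
    exact scale_ball hg x hr
  · apply Measurable.aemeasurable
    unfold Function.uncurry
    fun_prop

lemma ae_line {n : ℕ} {P : EE n → Prop} (hm : MeasurableSet {y | P y}) (hP : ∀ᵐ y, P y) (x : EE n) :
    ∀ᵐ w ∂(volume.restrict (ball (0 : EE n) 1)),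
      ∀ᵐ r ∂(volume.restrict (Set.Ioi (0:ℝ))), P (x + r • w) := by
  set g : EE n → ℝ≥0∞ := ({y | P y}ᶜ).indicator 1 with hg
  have hgm : Measurable g := measurable_one.indicator hm.compl
  have hg0 : ∀ s : Set (EE n), ∫⁻ y in s, g y = 0 := by
    intro s
    refine le_antisymm ((setLIntegral_le_lintegral _ _).trans ?_) zero_le
    rw [hg, lintegral_indicator_one hm.compl]
    exact (ae_iff.1 hP).le
  have h := swap_scale hgm x
  simp_rw [hg0, mul_zero, lintegral_zero] at h
  have hm2 : Measurable (fun q : EE n × ℝ => g (x + q.2 • q.1)) := by fun_prop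
  rw [lintegral_eq_zero_iff hm2.lintegral_prod_right'] at h
  filter_upwards [h] with w hw
  have hm3 : Measurable (fun r : ℝ => g (x + r • w)) := by fun_prop
  rw [Pi.zero_apply, lintegral_eq_zero_iff hm3] at hw
  filter_upwards [hw] with r hr
  by_contra hc
  have : x + r • w ∈ {y | P y}ᶜ := hc
  simp [hg, this] at hr

lemma point_bound {n : ℕ} (hn : 1 ≤ n) {v : EE n → ℝ} {L : NNReal} (hv : LipschitzWith L v)
    {R0 : ℝ} (hs : ∀ x, R0 < ‖x‖ → v x = 0) (x : EE n) :
    volume (ball (0 : EE n) 1) * ENNReal.ofReal |v x| ≤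
      ∫⁻ r in Set.Ioi (0:ℝ), ENNReal.ofReal ((r ^ n)⁻¹) *
        ∫⁻ y in ball x r, ENNReal.ofReal ‖fderiv ℝ v y‖ := by
  have : Nonempty (Fin n) := ⟨⟨0, hn⟩⟩
  have hgm : Measurable (fun y => ENNReal.ofReal ‖fderiv ℝ v y‖) :=
    (measurable_fderiv ℝ v).norm.ennreal_ofReal
  rw [← swap_scale hgm x, mul_comm, ← setLIntegral_const]
  apply lintegral_mono_ae
  have hne : ∀ᵐ w ∂(volume.restrict (ball (0 : EE n) 1)), w ≠ 0 :=
    ae_restrict_of_ae (Measure.ae_ne volume 0)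
  filter_upwards [ae_line (measurableSet_of_differentiableAt ℝ v) hv.ae_differentiableAt x, hne,
    ae_restrict_mem measurableSet_ball] with w hw hw0 hwb
  have hwp : 0 < ‖w‖ := norm_pos_iff.2 hw0
  have hw1 : ‖w‖ ≤ 1 := by
    have := mem_ball_zero_iff.1 hwb
    exact this.le
  refine line_bound hv x w hw1 ((|R0| + ‖x‖ + 1) / ‖w‖) (by positivity) ?_ hw
  apply hs
  have h1 : ‖((|R0| + ‖x‖ + 1) / ‖w‖) • w‖ = |R0| + ‖x‖ + 1 := by
    rw [norm_smul, Real.norm_eq_abs, abs_of_nonneg (by positivity)]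
    field_simp
  have h2 := norm_sub_le (x + ((|R0| + ‖x‖ + 1) / ‖w‖) • w) x
  rw [add_sub_cancel_left, h1] at h2
  linarith [le_abs_self R0]

lemma lint_Ioi_rpow {a c : ℝ} (ha : a < -1) (hc : 0 < c) :
    ∫⁻ r in Set.Ioi c, ENNReal.ofReal (r ^ a) = ENNReal.ofReal (c ^ (a + 1) / (-(a + 1))) := by
  rw [← ofReal_integral_eq_lintegral_ofReal (integrableOn_Ioi_rpow_of_lt ha hc),
    integral_Ioi_rpow_of_lt ha hc, neg_div, div_neg]
  filter_upwards [ae_restrict_mem measurableSet_Ioi] with r hr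
  exact Real.rpow_nonneg (hc.trans hr).le _

lemma lint_Ioc_rpow {a c : ℝ} (ha : -1 < a) (hc : 0 < c) :
    ∫⁻ r in Set.Ioc 0 c, ENNReal.ofReal (r ^ a) = ENNReal.ofReal (c ^ (a + 1) / (a + 1)) := by
  rw [← ofReal_integral_eq_lintegral_ofReal, ← intervalIntegral.integral_of_le hc.le,
    integral_rpow (Or.inl ha), Real.zero_rpow (by linarith), sub_zero]
  · exact (intervalIntegral.intervalIntegrable_rpow' ha).1
  · filter_upwards [ae_restrict_mem measurableSet_Ioc] with r hr
    exact Real.rpow_nonneg hr.1.le _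

lemma weight_le {s d : ℝ} (hs : 0 < s) (hd : 0 ≤ d) :
    ENNReal.ofReal (d ^ (-s)) ≤
      ∫⁻ r in Set.Ioi (0:ℝ), (Set.Ioi d).indicator (fun r => ENNReal.ofReal s * ENNReal.ofReal (r ^ (-s - 1))) r := by
  rcases hd.eq_or_lt with rfl | hd
  · rw [Real.zero_rpow (by linarith)]; simp
  · rw [lintegral_indicator measurableSet_Ioi, Measure.restrict_restrict measurableSet_Ioi,
      Set.inter_eq_left.2 (Set.Ioi_subset_Ioi hd.le), lintegral_const_mul' _ _ ofReal_ne_top,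
      lint_Ioi_rpow (by linarith) hd, ← ENNReal.ofReal_mul hs.le]
    apply ENNReal.ofReal_le_ofReal
    rw [show -s - 1 + 1 = -s by ring, neg_neg]
    field_simp
    rfl

lemma aikawa {n : ℕ} {K : Set (EE n)} (hK : K.Nonempty) {s t C_A : ℝ} (hs : 0 < s) (hst : s < t)
    (hCA : 1 ≤ C_A)
    (hthin : ∀ x ∈ K, ∀ r R : ℝ, 0 < r → r < R →
      volume (Metric.thickening r K ∩ Metric.closedBall x R) ≤
        ENNReal.ofReal (C_A * (r / R) ^ t) * volume (Metric.closedBall x R))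
    {x₀ : EE n} (hx₀ : x₀ ∈ K) {R : ℝ} (hR : 0 < R) :
    ∫⁻ x in closedBall x₀ R, ENNReal.ofReal (infDist x K ^ (-s)) ≤
      ENNReal.ofReal ((1 + s * C_A / (t - s)) * R ^ (-s)) * volume (closedBall x₀ R) := by
  set B := closedBall x₀ R with hB
  have hcon : Continuous (fun x : EE n => infDist x K) := continuous_infDist_pt K
  calc ∫⁻ x in B, ENNReal.ofReal (infDist x K ^ (-s))
      ≤ ∫⁻ x in B, ∫⁻ r in Set.Ioi (0:ℝ), (Set.Ioi (infDist x K)).indicator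
          (fun r => ENNReal.ofReal s * ENNReal.ofReal (r ^ (-s - 1))) r :=
        lintegral_mono fun x => weight_le hs infDist_nonneg
    _ = ∫⁻ r in Set.Ioi (0:ℝ), ∫⁻ x in B, (Set.Ioi (infDist x K)).indicator
          (fun r => ENNReal.ofReal s * ENNReal.ofReal (r ^ (-s - 1))) r := by
        apply lintegral_lintegral_swap
        apply Measurable.aemeasurable
        have : Function.uncurry (fun (x : EE n) (r : ℝ) => (Set.Ioi (infDist x K)).indicator
          (fun r => ENNReal.ofReal s * ENNReal.ofReal (r ^ (-s - 1))) r) =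
          ({q : EE n × ℝ | infDist q.1 K < q.2}).indicator
            (fun q => ENNReal.ofReal s * ENNReal.ofReal (q.2 ^ (-s - 1))) := by
          ext ⟨x, r⟩
          simp [Set.indicator, Function.uncurry]
        rw [this]
        apply Measurable.indicator (by fun_prop)
        exact measurableSet_lt (by fun_prop) (by fun_prop)
    _ = ∫⁻ r in Set.Ioi (0:ℝ), ENNReal.ofReal s * ENNReal.ofReal (r ^ (-s - 1)) *
          volume (thickening r K ∩ B) := by
        refine lintegral_congr fun r => ?_
        have : ∀ x, (Set.Ioi (infDist x K)).indicator
          (fun r => ENNReal.ofReal s * ENNReal.ofReal (r ^ (-s - 1))) r =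
          (thickening r K).indicator (fun _ => ENNReal.ofReal s * ENNReal.ofReal (r ^ (-s - 1))) x := by
          intro x
          simp [Set.indicator, mem_thickening_iff_infDist_lt hK]
        simp_rw [this]
        rw [lintegral_indicator isOpen_thickening.measurableSet, setLIntegral_const,
          Measure.restrict_apply isOpen_thickening.measurableSet]
    _ ≤ (∫⁻ r in Set.Ioc 0 R, ENNReal.ofReal (s * C_A * R ^ (-t)) * volume B * ENNReal.ofReal (r ^ (t - s - 1)))
        + ∫⁻ r in Set.Ioi R, ENNReal.ofReal s * volume B * ENNReal.ofReal (r ^ (-s - 1)) := by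
        rw [← Set.Ioc_union_Ioi_eq_Ioi hR.le]
        refine (lintegral_union_le _ _ _).trans (add_le_add ?_ ?_)
        · refine setLIntegral_mono' measurableSet_Ioc fun r hr => ?_
          have h1 : volume (thickening r K ∩ B) ≤ ENNReal.ofReal (C_A * (r / R) ^ t) * volume B := by
            rcases hr.2.eq_or_lt with rfl | h
            · rw [div_self hr.1.ne', Real.one_rpow, mul_one]
              calc _ ≤ volume B := measure_mono Set.inter_subset_right
                _ = 1 * volume B := (one_mul _).symm
                _ ≤ _ := by gcongr; simpa using hCA
            · exact hthin x₀ hx₀ r R hr.1 h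
          refine (mul_le_mul_right h1 _).trans (le_of_eq ?_)
          rw [← mul_assoc, mul_right_comm _ (volume B), ← ENNReal.ofReal_mul hs.le,
            ← ENNReal.ofReal_mul, ← ENNReal.ofReal_mul]
          · congr 2
            have hr0 := hr.1
            rw [Real.div_rpow hr0.le hR.le, show t - s - 1 = t + (-s - 1) by ring,
              Real.rpow_add hr0, Real.rpow_neg hR.le]
            field_simp
          · positivity
          · have := Real.rpow_nonneg hr.1.le (-s - 1); positivity
        · refine setLIntegral_mono' measurableSet_Ioi fun r hr => ?_
          rw [mul_right_comm]
          gcongr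
          exact Set.inter_subset_right
    _ = _ := by
        have hts : 0 < t - s := by linarith
        have hBt : volume B ≠ ∞ := measure_closedBall_lt_top.ne
        rw [lintegral_const_mul' _ _ (mul_ne_top ofReal_ne_top hBt),
          lintegral_const_mul' _ _ (mul_ne_top ofReal_ne_top hBt), lint_Ioc_rpow (by linarith) hR,
          lint_Ioi_rpow (by linarith) hR, mul_right_comm, mul_right_comm _ (volume B),
          ← add_mul, ← ENNReal.ofReal_mul (by positivity), ← ENNReal.ofReal_mul (by positivity),
          ← ENNReal.ofReal_add]
        · congr 2
          rw [show t - s - 1 + 1 = t + -s by ring, show -s - 1 + 1 = -s by ring, Real.rpow_add hR,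
            Real.rpow_neg hR.le t, ← sub_eq_add_neg]
          field_simp
          ring
        · have : 0 < t - s - 1 + 1 := by linarith
          positivity
        · have : 0 < -(-s - 1 + 1) := by linarith
          positivity

lemma ball_bound {n : ℕ} {K : Set (EE n)} (hKc : IsClosed K) (hK : K.Nonempty) {s t C_A : ℝ} (hs : 0 < s) (hst : s < t)
    (hCA : 1 ≤ C_A)
    (hthin : ∀ x ∈ K, ∀ r R : ℝ, 0 < r → r < R →
      volume (Metric.thickening r K ∩ Metric.closedBall x R) ≤
        ENNReal.ofReal (C_A * (r / R) ^ t) * volume (Metric.closedBall x R))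
    (y : EE n) {r : ℝ} (hr : 0 < r) (hy : infDist y K ≤ 2 * r) :
    ∫⁻ x in ball y r, ENNReal.ofReal (infDist x K ^ (-s)) ≤
      ENNReal.ofReal ((1 + s * C_A / (t - s)) * 3 ^ ((n : ℝ) - s)) * volume (ball (0 : EE n) 1) *
        ENNReal.ofReal (r ^ ((n : ℝ) - s)) := by
  obtain ⟨x₀, hx₀, hd⟩ := hKc.exists_infDist_eq_dist hK y
  have hsub : ball y r ⊆ closedBall x₀ (3 * r) := by
    intro x hx
    rw [mem_closedBall]
    have := mem_ball.1 hx
    linarith [dist_triangle x y x₀]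
  refine (lintegral_mono_set hsub).trans ((aikawa hK hs hst hCA hthin hx₀ (by positivity)).trans ?_)
  have hts : 0 < t - s := by linarith
  have h3 : 0 < 3 * r := by positivity
  rw [Measure.addHaar_closedBall _ _ h3.le, finrank_euclideanSpace_fin, ← mul_assoc,
    ← ENNReal.ofReal_mul (by positivity),
    mul_right_comm (ENNReal.ofReal ((1 + s * C_A / (t - s)) * 3 ^ ((n : ℝ) - s))),
    ← ENNReal.ofReal_mul (by positivity)]
  apply le_of_eq
  congr 2
  rw [mul_assoc, mul_assoc, ← Real.mul_rpow (by norm_num) hr.le, Real.rpow_sub h3, Real.rpow_neg h3.le,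
    Real.rpow_natCast]
  field_simp

lemma kernel_bound {n : ℕ} (hn : 1 ≤ n) {K : Set (EE n)} (hKc : IsClosed K) (hK : K.Nonempty) {s t C_A : ℝ}
    (hs : 1 < s) (hst : s < t) (hCA : 1 ≤ C_A)
    (hthin : ∀ x ∈ K, ∀ r R : ℝ, 0 < r → r < R →
      volume (Metric.thickening r K ∩ Metric.closedBall x R) ≤
        ENNReal.ofReal (C_A * (r / R) ^ t) * volume (Metric.closedBall x R)) :
    ∃ C : ℝ, 0 < C ∧ ∀ y, y ∉ K →
      ∫⁻ r in Set.Ioi (0:ℝ), ENNReal.ofReal ((r ^ n)⁻¹) *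
        ∫⁻ x in ball y r, ENNReal.ofReal (infDist x K ^ (-s)) ≤
      ENNReal.ofReal (C * infDist y K ^ (1 - s)) * volume (ball (0 : EE n) 1) := by
  have : Nonempty (Fin n) := ⟨⟨0, hn⟩⟩
  have hts : 0 < t - s := by linarith
  have hs1 : 0 < s - 1 := by linarith
  set C2 : ℝ := (1 + s * C_A / (t - s)) * 3 ^ ((n : ℝ) - s) with hC2
  have hC2p : 0 < C2 := by positivity
  refine ⟨(1 + C2 / (s - 1)) * 2⁻¹ ^ (1 - s), by positivity, fun y hy => ?_⟩
  have hd : 0 < infDist y K := (hKc.notMem_iff_infDist_pos hK).1 hy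
  set d := infDist y K with hdd
  set V := volume (ball (0 : EE n) 1) with hV
  have hVt : V ≠ ∞ := measure_ball_lt_top.ne
  have hd2 : 0 < 2⁻¹ * d := by positivity
  calc _ ≤ (∫⁻ r in Set.Ioc 0 (2⁻¹ * d), ENNReal.ofReal ((2⁻¹ * d) ^ (-s)) * V)
        + ∫⁻ r in Set.Ioi (2⁻¹ * d), ENNReal.ofReal C2 * V * ENNReal.ofReal (r ^ (-s)) := by
        rw [← Set.Ioc_union_Ioi_eq_Ioi hd2.le]
        refine (lintegral_union_le _ _ _).trans (add_le_add ?_ ?_)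
        · refine setLIntegral_mono' measurableSet_Ioc fun r hr => ?_
          have h1 : ∫⁻ x in ball y r, ENNReal.ofReal (infDist x K ^ (-s)) ≤
              ENNReal.ofReal ((2⁻¹ * d) ^ (-s)) * (ENNReal.ofReal (r ^ n) * V) := by
            have hvol := Measure.addHaar_ball (volume : Measure (EE n)) y hr.1.le
            rw [finrank_euclideanSpace_fin] at hvol
            rw [← hvol, ← setLIntegral_const]
            refine setLIntegral_mono' measurableSet_ball fun x hx => ?_
            apply ENNReal.ofReal_le_ofReal
            apply Real.rpow_le_rpow_of_nonpos hd2 _ (by linarith)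
            have h := infDist_le_infDist_add_dist (s := K) (x := y) (y := x)
            have hx' := mem_ball'.1 hx
            have := hr.2
            linarith
          refine (mul_le_mul_right h1 _).trans (le_of_eq ?_)
          have hrn : 0 < r ^ n := pow_pos hr.1 n
          rw [mul_left_comm, ← mul_assoc (ENNReal.ofReal (r ^ n)⁻¹), ← ENNReal.ofReal_mul (by positivity),
            inv_mul_cancel₀ hrn.ne', ofReal_one, one_mul]
        · refine setLIntegral_mono' measurableSet_Ioi fun r hr => ?_
          have hr' : 2⁻¹ * d < r := hr
          have hr0 : 0 < r := hd2.trans hr'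
          have h1 := ball_bound hKc hK (by linarith) hst hCA hthin y hr0 (by linarith)
          refine (mul_le_mul_right h1 _).trans (le_of_eq ?_)
          rw [mul_left_comm, ← ENNReal.ofReal_mul (by positivity)]
          congr 2
          rw [Real.rpow_sub hr0, Real.rpow_neg hr0.le, Real.rpow_natCast]
          field_simp
    _ = _ := by
        rw [setLIntegral_const, lintegral_const_mul' _ _ (mul_ne_top ofReal_ne_top hVt),
          lint_Ioi_rpow (by linarith) hd2, Real.volume_Ioc, mul_right_comm, mul_right_comm _ V,
          ← add_mul, ← ENNReal.ofReal_mul (by positivity), ← ENNReal.ofReal_mul (by positivity),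
          ← ENNReal.ofReal_add]
        · congr 2
          rw [mul_assoc (1 + C2 / (s - 1)), ← Real.mul_rpow (by norm_num) hd.le, show 1 - s = -s + 1 by ring,
            Real.rpow_add_one hd2.ne']
          clear_value C2
          rw [show -(-s+1) = s - 1 by ring]
          field_simp
          ring
        · have : 0 ≤ 2⁻¹ * d - 0 := by linarith
          positivity
        · have : 0 < -(-s + 1) := by linarith
          positivity

lemma null_of_thin {n : ℕ} {K : Set (EE n)} (hK : K.Nonempty) {t C_A : ℝ} (ht : 0 < t)
    (hthin : ∀ x ∈ K, ∀ r R : ℝ, 0 < r → r < R →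
      volume (Metric.thickening r K ∩ Metric.closedBall x R) ≤
        ENNReal.ofReal (C_A * (r / R) ^ t) * volume (Metric.closedBall x R)) :
    volume K = 0 := by
  obtain ⟨x₀, hx₀⟩ := hK
  have key : ∀ N : ℕ, volume (K ∩ closedBall x₀ (N + 1 : ℝ)) = 0 := by
    intro N
    set R : ℝ := N + 1 with hRdef
    have hR : 0 < R := by positivity
    have hlim : Filter.Tendsto (fun r : ℝ => ENNReal.ofReal (C_A * (r / R) ^ t) * volume (closedBall x₀ R))
        (nhdsWithin 0 (Set.Ioi 0)) (nhds 0) := by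
      have hc : Filter.Tendsto (fun r : ℝ => C_A * (r / R) ^ t) (nhds 0) (nhds (C_A * (0 / R) ^ t)) := by
        have : Continuous (fun r : ℝ => C_A * (r / R) ^ t) :=
          continuous_const.mul ((continuous_id.div_const R).rpow_const (fun _ => Or.inr ht.le))
        exact this.tendsto 0
      rw [zero_div, Real.zero_rpow ht.ne', mul_zero] at hc
      have h2 := ENNReal.Tendsto.mul_const (b := volume (closedBall x₀ R)) (ENNReal.tendsto_ofReal hc)
        (Or.inr measure_closedBall_lt_top.ne)
      rw [ofReal_zero, zero_mul] at h2
      exact h2.mono_left nhdsWithin_le_nhds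
    refine le_antisymm (ge_of_tendsto hlim ?_) zero_le
    filter_upwards [Ioo_mem_nhdsGT hR] with r hr
    refine le_trans (measure_mono ?_) (hthin x₀ hx₀ r R hr.1 hr.2)
    exact Set.inter_subset_inter_left _ (self_subset_thickening hr.1 K)
  have : K ⊆ ⋃ N : ℕ, K ∩ closedBall x₀ (N + 1 : ℝ) := by
    intro x hx
    obtain ⟨N, hN⟩ := exists_nat_ge (dist x x₀)
    exact Set.mem_iUnion.2 ⟨N, hx, mem_closedBall.2 (by linarith)⟩
  exact measure_mono_null this (measure_iUnion_null key)

lemma hardy_one {n : ℕ} (hn : 1 ≤ n) {K : Set (EE n)} (hKc : IsClosed K) (hK : K.Nonempty) {s t C_A : ℝ}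
    (hs : 1 < s) (hst : s < t) (hCA : 1 ≤ C_A)
    (hthin : ∀ x ∈ K, ∀ r R : ℝ, 0 < r → r < R →
      volume (Metric.thickening r K ∩ Metric.closedBall x R) ≤
        ENNReal.ofReal (C_A * (r / R) ^ t) * volume (Metric.closedBall x R)) :
    ∃ C : ℝ, 0 < C ∧ ∀ (v : EE n → ℝ) (L : NNReal) (R0 : ℝ), LipschitzWith L v →
      (∀ x, R0 < ‖x‖ → v x = 0) →
      ∫⁻ x, ENNReal.ofReal (infDist x K ^ (-s)) * ENNReal.ofReal |v x| ≤
        ENNReal.ofReal C *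
          ∫⁻ y, ENNReal.ofReal ‖fderiv ℝ v y‖ * ENNReal.ofReal (infDist y K ^ (1 - s)) := by
  obtain ⟨C, hC, hker⟩ := kernel_bound hn hKc hK hs hst hCA hthin
  have hnull := null_of_thin hK (by linarith) hthin
  refine ⟨C, hC, fun v L R0 hv hsupp => ?_⟩
  set V := volume (ball (0 : EE n) 1) with hV
  have hVt : V ≠ ∞ := measure_ball_lt_top.ne
  have hV0 : V ≠ 0 := (measure_ball_pos volume _ one_pos).ne'
  have hcon : Continuous (fun x : EE n => infDist x K) := continuous_infDist_pt K
  set w : EE n → ℝ≥0∞ := fun x => ENNReal.ofReal (infDist x K ^ (-s)) with hw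
  set g : EE n → ℝ≥0∞ := fun y => ENNReal.ofReal ‖fderiv ℝ v y‖ with hg
  set k : ℝ → ℝ≥0∞ := fun r => ENNReal.ofReal ((r ^ n)⁻¹) with hk
  have hwm : Measurable w := by fun_prop
  have hgm : Measurable g := (measurable_fderiv ℝ v).norm.ennreal_ofReal
  have hkm : Measurable k := by fun_prop
  set F : EE n → ℝ → EE n → ℝ≥0∞ := fun x r y =>
    w x * k r * g y * ({q : ℝ × ℝ | q.1 < q.2}).indicator 1 (dist x y, r) with hF
  have hSm : Measurable (({q : ℝ × ℝ | q.1 < q.2}).indicator (1 : ℝ × ℝ → ℝ≥0∞)) :=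
    measurable_one.indicator (measurableSet_lt measurable_fst measurable_snd)
  have hF1 : ∀ x r, ∫⁻ y, F x r y = w x * (k r * ∫⁻ y in ball x r, g y) := by
    intro x r
    rw [← lintegral_indicator measurableSet_ball, ← mul_assoc, ← lintegral_const_mul _ (hgm.indicator measurableSet_ball)]
    refine lintegral_congr fun y => ?_
    by_cases h : dist x y < r
    · have h' : y ∈ ball x r := mem_ball'.2 h
      simp [hF, Set.indicator_of_mem h', h]
    · have h' : y ∉ ball x r := fun h2 => h (mem_ball'.1 h2)
      simp [hF, Set.indicator_of_notMem h', h]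
  have hF2 : ∀ y r, ∫⁻ x, F x r y = g y * (k r * ∫⁻ x in ball y r, w x) := by
    intro y r
    rw [← lintegral_indicator measurableSet_ball, ← mul_assoc, ← lintegral_const_mul _ (hwm.indicator measurableSet_ball)]
    refine lintegral_congr fun x => ?_
    by_cases h : dist x y < r
    · have h' : x ∈ ball y r := mem_ball.2 h
      simp [hF, Set.indicator_of_mem h', h]
      ring
    · have h' : x ∉ ball y r := fun h2 => h (mem_ball.1 h2)
      simp [hF, Set.indicator_of_notMem h', h]
  have hFm : Measurable (fun q : (EE n × ℝ) × EE n => F q.1.1 q.1.2 q.2) := by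
    simp only [hF]
    have : Measurable (fun q : (EE n × ℝ) × EE n => (dist q.1.1 q.2, q.1.2)) := by fun_prop
    have := hSm.comp this
    have h2 : Measurable (fun q : (EE n × ℝ) × EE n => w q.1.1 * k q.1.2 * g q.2) := by fun_prop
    exact h2.mul this
  have hFm2 : ∀ r, Measurable (fun q : EE n × EE n => F q.1 r q.2) := by
    intro r
    exact hFm.comp (g := fun q : (EE n × ℝ) × EE n => F q.1.1 q.1.2 q.2)
      (f := fun q : EE n × EE n => ((q.1, r), q.2)) (by fun_prop)
  have hFm3 : Measurable (fun q : (ℝ × EE n) × EE n => F q.2 q.1.1 q.1.2) := by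
    exact hFm.comp (g := fun q : (EE n × ℝ) × EE n => F q.1.1 q.1.2 q.2)
      (f := fun q : (ℝ × EE n) × EE n => ((q.2, q.1.1), q.1.2)) (by fun_prop)
  have main : V * ∫⁻ x, w x * ENNReal.ofReal |v x| ≤
      V * (ENNReal.ofReal C * ∫⁻ y, g y * ENNReal.ofReal (infDist y K ^ (1 - s))) := by
    calc V * ∫⁻ x, w x * ENNReal.ofReal |v x|
        = ∫⁻ x, w x * (V * ENNReal.ofReal |v x|) := by
          rw [← lintegral_const_mul' _ _ hVt]
          refine lintegral_congr fun x => ?_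
          ring
      _ ≤ ∫⁻ x, w x * ∫⁻ r in Set.Ioi (0:ℝ), k r * ∫⁻ y in ball x r, g y := by
          refine lintegral_mono fun x => ?_
          exact mul_le_mul_right (point_bound hn hv hsupp x) _
      _ = ∫⁻ x, ∫⁻ r in Set.Ioi (0:ℝ), ∫⁻ y, F x r y := by
          refine lintegral_congr fun x => ?_
          simp_rw [hF1]
          rw [lintegral_const_mul' _ _ ofReal_ne_top]
      _ = ∫⁻ r in Set.Ioi (0:ℝ), ∫⁻ x, ∫⁻ y, F x r y := by
          apply lintegral_lintegral_swap
          exact (hFm.lintegral_prod_right' (ν := volume)).aemeasurable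
      _ = ∫⁻ r in Set.Ioi (0:ℝ), ∫⁻ y, ∫⁻ x, F x r y := by
          refine lintegral_congr fun r => ?_
          exact lintegral_lintegral_swap (hFm2 r).aemeasurable
      _ = ∫⁻ y, ∫⁻ r in Set.Ioi (0:ℝ), ∫⁻ x, F x r y := by
          apply lintegral_lintegral_swap
          exact (hFm3.lintegral_prod_right' (ν := volume)).aemeasurable
      _ = ∫⁻ y, g y * ∫⁻ r in Set.Ioi (0:ℝ), k r * ∫⁻ x in ball y r, w x := by
          refine lintegral_congr fun y => ?_
          simp_rw [hF2]
          rw [lintegral_const_mul' _ _ ofReal_ne_top]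
      _ ≤ ∫⁻ y, (V * ENNReal.ofReal C) * (g y * ENNReal.ofReal (infDist y K ^ (1 - s))) := by
          apply lintegral_mono_ae
          have : ∀ᵐ y, y ∉ K := measure_eq_zero_iff_ae_notMem.1 hnull
          filter_upwards [this] with y hy
          refine (mul_le_mul_right (hker y hy) _).trans (le_of_eq ?_)
          rw [ENNReal.ofReal_mul hC.le]
          ring
      _ = _ := by
          rw [lintegral_const_mul' _ _ (mul_ne_top hVt ofReal_ne_top), mul_assoc]
  exact (ENNReal.mul_le_mul_iff_right hV0 hVt).1 main

lemma young_aux {a b ε p : ℝ} (ha : 0 ≤ a) (hb : 0 ≤ b) (hε : 0 < ε) (hp : 1 ≤ p) :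
    a ^ (p - 1) * b ≤ ε * a ^ p + ε ^ (1 - p) * b ^ p := by
  rcases le_or_gt b (ε * a) with h | h
  · have h2 : 0 ≤ ε ^ (1 - p) * b ^ p := by positivity
    rcases ha.eq_or_lt with rfl | ha'
    · have : b = 0 := le_antisymm (by simpa using h) hb
      subst this
      rw [mul_zero]; positivity
    · have : a ^ (p - 1) * b ≤ a ^ (p - 1) * (ε * a) := by gcongr
      have h3 : a ^ (p - 1) * (ε * a) = ε * a ^ p := by
        rw [Real.rpow_sub_one ha'.ne']; field_simp
      linarith
  · have hb' : 0 < b := lt_of_le_of_lt (by positivity) h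
    have h1 : a ≤ b / ε := by rw [le_div_iff₀ hε]; linarith
    have h2 : a ^ (p - 1) ≤ (b / ε) ^ (p - 1) := Real.rpow_le_rpow ha h1 (by linarith)
    have h3 : (b / ε) ^ (p - 1) * b = ε ^ (1 - p) * b ^ p := by
      rw [Real.div_rpow hb hε.le, Real.rpow_sub_one hb'.ne', show 1 - p = -(p - 1) by ring,
        Real.rpow_neg hε.le]
      field_simp
    have h4 : 0 ≤ ε * a ^ p := by positivity
    nlinarith

lemma young_weight {U b d ε p β : ℝ} (hU : 0 ≤ U) (hb : 0 ≤ b) (hd : 0 < d) (hε : 0 < ε) (hp : 1 ≤ p) :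
    U ^ (p - 1) * b * d ^ (1 - (p - β)) ≤
      ε * (U ^ p * d ^ (β - p)) + ε ^ (1 - p) * (b ^ p * d ^ β) := by
  have h := young_aux (a := U / d) (by positivity) hb hε hp
  have hdβ : 0 < d ^ β := Real.rpow_pos_of_pos hd _
  have h2 := mul_le_mul_of_nonneg_right h hdβ.le
  have e1 : (U / d) ^ (p - 1) * b * d ^ β = U ^ (p - 1) * b * d ^ (1 - (p - β)) := by
    rw [Real.div_rpow hU hd.le, show 1 - (p - β) = β - (p - 1) by ring, Real.rpow_sub hd β (p - 1)]
    field_simp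
  have e2 : (U / d) ^ p * d ^ β = U ^ p * d ^ (β - p) := by
    rw [Real.div_rpow hU hd.le, Real.rpow_sub hd]
    field_simp
  calc _ = _ := e1.symm
    _ ≤ _ := h2
    _ = ε * ((U / d) ^ p * d ^ β) + ε ^ (1 - p) * (b ^ p * d ^ β) := by ring
    _ = _ := by rw [e2]

lemma fderiv_pow_bound {n : ℕ} {u : EE n → ℝ} {p : ℝ} (hp : 1 ≤ p) {x : EE n}
    (hu : DifferentiableAt ℝ u x) :
    ‖fderiv ℝ (fun y => |u y| ^ p) x‖ ≤ p * (|u x| ^ (p - 1) * ‖fderiv ℝ u x‖) := by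
  by_cases h0 : u x = 0
  · have : IsLocalMin (fun y => |u y| ^ p) x := by
      refine Filter.Eventually.of_forall fun y => ?_
      simp only [h0, abs_zero]
      rw [Real.zero_rpow (by linarith)]
      positivity
    rw [this.fderiv_eq_zero, norm_zero]
    positivity
  · have h1 : HasDerivAt (fun z : ℝ => |z| ^ p) ((p * |u x| ^ (p - 1)) * (SignType.sign (u x) : ℝ)) (u x) :=
      HasDerivAt.comp (u x) (Real.hasDerivAt_rpow_const (Or.inr hp)) (hasDerivAt_abs h0)
    have h2 := h1.comp_hasFDerivAt x hu.hasFDerivAt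
    have h3 : HasFDerivAt (fun y => |u y| ^ p) (((p * |u x| ^ (p - 1)) * (SignType.sign (u x) : ℝ)) • fderiv ℝ u x) x := h2
    rw [h3.fderiv, norm_smul, ← mul_assoc]
    apply mul_le_mul_of_nonneg_right _ (norm_nonneg _)
    rw [norm_mul, Real.norm_eq_abs, abs_of_nonneg (by positivity)]
    apply mul_le_of_le_one_right (by positivity)
    rcases lt_or_gt_of_ne h0 with h | h <;> simp [h]

lemma lip_pow {n : ℕ} {u : EE n → ℝ} {p M : ℝ} (hp : 1 ≤ p) {L : NNReal} (hu : LipschitzWith L u)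
    (hM : ∀ x, |u x| ≤ M) : ∃ L' : NNReal, LipschitzWith L' (fun y => |u y| ^ p) := by
  have hM0 : 0 ≤ M := (abs_nonneg _).trans (hM 0)
  have h1 : LipschitzOnWith (Real.toNNReal (p * M ^ (p - 1))) (fun z : ℝ => z ^ p) (Set.Icc 0 M) := by
    refine Convex.lipschitzOnWith_of_nnnorm_hasDerivWithin_le (convex_Icc 0 M)
      (f' := fun z => p * z ^ (p - 1))
      (fun z hz => (Real.hasDerivAt_rpow_const (Or.inr hp)).hasDerivWithinAt) ?_
    intro z hz
    rw [← NNReal.coe_le_coe, coe_nnnorm, Real.coe_toNNReal _ (by positivity), Real.norm_eq_abs,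
      abs_of_nonneg (by have := hz.1; positivity)]
    have := Real.rpow_le_rpow hz.1 hz.2 (by linarith : 0 ≤ p - 1)
    gcongr
  refine ⟨Real.toNNReal (p * M ^ (p - 1)) * L, LipschitzWith.of_dist_le_mul fun x y => ?_⟩
  have h2 := h1.dist_le_mul (|u x|) ⟨abs_nonneg _, hM x⟩ (|u y|) ⟨abs_nonneg _, hM y⟩
  refine h2.trans ?_
  rw [NNReal.coe_mul, mul_assoc]
  gcongr
  refine le_trans ?_ (hu.dist_le_mul x y)
  rw [Real.dist_eq, Real.dist_eq]
  exact abs_abs_sub_abs_le_abs_sub _ _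

/-- Euclidean case of Corollary 6.5: if `β < p - 1` and the lower
Assouad codimension of `Ωᶜ` exceeds `p - β`, then the `(p,β)`-Hardy inequality holds for
all Lipschitz functions whose support in `Ω` is bounded (the test functions need not
vanish on `Ωᶜ`). -/
theorem hardy_bounded_support_of_lower_assouad_codim_gt
    (n : ℕ) (hn : 1 ≤ n) (p β : ℝ) (hp : 1 ≤ p) (hβ : β < p - 1)
    (Ω : Set (EuclideanSpace ℝ (Fin n))) (hΩopen : IsOpen Ω) (hΩc : Ωᶜ.Nonempty)
    (t C_A : ℝ) (ht : p - β < t) (hCA : 1 ≤ C_A)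
    (hthin : ∀ x ∈ Ωᶜ, ∀ r R : ℝ, 0 < r → r < R →
      volume (Metric.thickening r Ωᶜ ∩ Metric.closedBall x R) ≤
        ENNReal.ofReal (C_A * (r / R) ^ t) * volume (Metric.closedBall x R)) :
    ∃ C : ℝ, 0 < C ∧ ∀ u : EuclideanSpace ℝ (Fin n) → ℝ,
      (∃ L : NNReal, LipschitzWith L u) → Bornology.IsBounded {x ∈ Ω | u x ≠ 0} →
      ∫⁻ x in Ω, ENNReal.ofReal (|u x| ^ p * Metric.infDist x Ωᶜ ^ (β - p)) ≤
        ENNReal.ofReal C *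
          ∫⁻ x in Ω, ENNReal.ofReal (‖fderiv ℝ u x‖ ^ p * Metric.infDist x Ωᶜ ^ β) := by
  have hKc : IsClosed Ωᶜ := hΩopen.isClosed_compl
  have hs : 1 < p - β := by linarith
  obtain ⟨C1, hC1, hardy⟩ := hardy_one hn hKc hΩc hs ht hCA hthin
  have hnull := null_of_thin hΩc (by linarith) hthin
  have hmem : ∀ᵐ x : EE n, x ∈ Ω := by
    filter_upwards [measure_eq_zero_iff_ae_notMem.1 hnull] with x hx
    exact not_not.1 hx
  have hres : (volume : Measure (EE n)).restrict Ω = volume := Measure.restrict_eq_self_of_ae_mem hmem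
  set ε : ℝ := 1 / (2 * (C1 * p)) with hε
  have hp0 : 0 < p := by linarith
  have hεp : 0 < ε := by positivity
  set C3 : ℝ := C1 * p * ε ^ (1 - p) with hC3
  have hC3p : 0 < C3 := by positivity
  refine ⟨2 * C3, by positivity, ?_⟩
  rintro u ⟨L, hu⟩ hbd
  rw [hres]
  obtain ⟨R0, hR0⟩ := hbd.subset_closedBall (0 : EE n)
  have hsupp : ∀ x, R0 < ‖x‖ → u x = 0 := by
    have hop : IsOpen {x : EE n | R0 < ‖x‖ ∧ u x ≠ 0} :=
      (isOpen_lt continuous_const continuous_norm).inter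
        (isOpen_ne_fun hu.continuous continuous_const)
    have h0 : volume {x : EE n | R0 < ‖x‖ ∧ u x ≠ 0} = 0 := by
      refine measure_mono_null (fun x hx => ?_) hnull
      intro hxΩ
      have := mem_closedBall_zero_iff.1 (hR0 ⟨hxΩ, hx.2⟩)
      exact absurd hx.1 (not_lt.2 this)
    have he := (hop.measure_eq_zero_iff volume).1 h0
    intro x hx
    by_contra hc
    have : x ∈ {x : EE n | R0 < ‖x‖ ∧ u x ≠ 0} := ⟨hx, hc⟩
    rw [he] at this
    exact this
  set M : ℝ := |u 0| + L * |R0| with hM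
  have hMb : ∀ x, |u x| ≤ M := by
    intro x
    rcases le_or_gt ‖x‖ R0 with h | h
    · have h1 := hu.dist_le_mul x 0
      rw [Real.dist_eq, dist_zero_right] at h1
      have h2 : (L : ℝ) * ‖x‖ ≤ L * |R0| := by
        gcongr
        exact h.trans (le_abs_self _)
      have h3 := abs_sub_abs_le_abs_sub (u x) (u 0)
      linarith
    · rw [hsupp x h, abs_zero]; positivity
  obtain ⟨L', hv⟩ := lip_pow hp hu hMb
  have hvs : ∀ x, R0 < ‖x‖ → |u x| ^ p = 0 := by
    intro x hx
    rw [hsupp x hx, abs_zero, Real.zero_rpow hp0.ne']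
  have hH := hardy _ L' R0 hv hvs
  set A := ∫⁻ x, ENNReal.ofReal (|u x| ^ p * infDist x Ωᶜ ^ (β - p)) with hA
  set D := ∫⁻ x, ENNReal.ofReal (‖fderiv ℝ u x‖ ^ p * infDist x Ωᶜ ^ β) with hD
  have hAeq : ∫⁻ x, ENNReal.ofReal (infDist x Ωᶜ ^ (-(p - β))) * ENNReal.ofReal |(|u x| ^ p)| = A := by
    refine lintegral_congr fun x => ?_
    rw [abs_of_nonneg (by positivity), mul_comm, ← ENNReal.ofReal_mul (by positivity), neg_sub]
  rw [hAeq] at hH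
  have hAfin : A ≠ ∞ := by
    obtain ⟨x₀, hx₀⟩ := hΩc
    set r := |R0| + ‖x₀‖ + 1 with hr
    have hrp : 0 < r := by positivity
    have hb := ball_bound (s := p - β) hKc ⟨x₀, hx₀⟩ (by linarith) ht hCA hthin x₀ hrp (by
      rw [infDist_zero_of_mem hx₀]; positivity)
    have hle : A ≤ ENNReal.ofReal (M ^ p) * ∫⁻ x in ball x₀ r, ENNReal.ofReal (infDist x Ωᶜ ^ (-(p - β))) := by
      rw [← lintegral_const_mul' _ _ ofReal_ne_top, ← lintegral_indicator measurableSet_ball]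
      refine lintegral_mono fun x => ?_
      by_cases hx : x ∈ ball x₀ r
      · rw [Set.indicator_of_mem hx, ← ENNReal.ofReal_mul (by positivity), neg_sub]
        apply ENNReal.ofReal_le_ofReal
        have hdn : 0 ≤ infDist x Ωᶜ := infDist_nonneg
        have := hMb x
        gcongr
      · rw [Set.indicator_of_notMem hx, hvs x, zero_mul, ofReal_zero]
        rw [mem_ball, not_lt, dist_eq_norm] at hx
        have := norm_sub_le x x₀
        linarith [le_abs_self R0]
    refine ne_top_of_le_ne_top ?_ (hle.trans (mul_le_mul_right hb _))
    exact mul_ne_top ofReal_ne_top (mul_ne_top (mul_ne_top ofReal_ne_top measure_ball_lt_top.ne) ofReal_ne_top)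
  have hcon : Continuous (fun x : EE n => infDist x Ωᶜ) := continuous_infDist_pt _
  have hstep : ∫⁻ y, ENNReal.ofReal ‖fderiv ℝ (fun y => |u y| ^ p) y‖ *
      ENNReal.ofReal (infDist y Ωᶜ ^ (1 - (p - β))) ≤
      ENNReal.ofReal (p * ε) * A + ENNReal.ofReal (p * ε ^ (1 - p)) * D := by
    have hum : Measurable u := hu.continuous.measurable
    rw [hA, hD, ← lintegral_const_mul' _ _ ofReal_ne_top, ← lintegral_const_mul' _ _ ofReal_ne_top,
      ← lintegral_add_left (by fun_prop)]
    apply lintegral_mono_ae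
    filter_upwards [hmem, hu.ae_differentiableAt] with x hx hdiff
    have hd : 0 < infDist x Ωᶜ := (hKc.notMem_iff_infDist_pos hΩc).1 (not_not.2 hx)
    rw [← ENNReal.ofReal_mul (norm_nonneg _), ← ENNReal.ofReal_mul (by positivity),
      ← ENNReal.ofReal_mul (by positivity), ← ENNReal.ofReal_add (by positivity) (by positivity)]
    apply ENNReal.ofReal_le_ofReal
    have h1 := fderiv_pow_bound hp hdiff
    have h2 := young_weight (β := β) (abs_nonneg (u x)) (norm_nonneg (fderiv ℝ u x)) hd hεp hp
    have hdp : 0 ≤ infDist x Ωᶜ ^ (1 - (p - β)) := by positivity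
    calc _ ≤ p * (|u x| ^ (p - 1) * ‖fderiv ℝ u x‖) * infDist x Ωᶜ ^ (1 - (p - β)) := by gcongr
      _ = p * (|u x| ^ (p - 1) * ‖fderiv ℝ u x‖ * infDist x Ωᶜ ^ (1 - (p - β))) := by ring
      _ ≤ p * _ := mul_le_mul_of_nonneg_left h2 hp0.le
      _ = _ := by ring
  have hfin : A ≤ ENNReal.ofReal (1 / 2) * A + ENNReal.ofReal C3 * D := by
    refine (hH.trans (mul_le_mul_right hstep _)).trans (le_of_eq ?_)
    rw [mul_add, ← mul_assoc, ← mul_assoc, ← ENNReal.ofReal_mul hC1.le, ← ENNReal.ofReal_mul hC1.le]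
    congr 3
    · rw [hε]; field_simp
    · rw [hC3]; ring_nf
  by_cases hDt : D = ∞
  · rw [hDt, ENNReal.mul_top]
    · exact le_top
    · exact (ENNReal.ofReal_pos.2 (by positivity)).ne'
  lift A to NNReal using hAfin with A'
  lift D to NNReal using hDt with D'
  rw [ENNReal.ofReal, ENNReal.ofReal] at hfin
  rw [ENNReal.ofReal]
  norm_cast at hfin ⊢
  rw [← NNReal.coe_le_coe] at hfin ⊢
  push_cast [Real.coe_toNNReal _ hC3p.le] at hfin ⊢
  rw [Real.coe_toNNReal _ (by positivity)] at hfin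
  rw [Real.coe_toNNReal _ (by positivity)]
  linarith
end
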